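/- arXiv:2106.01211 — 10 statements merged into one kernel-verified Lean document; each statement's English description precedes it below -/
import Mathlib

section
/- For all integers n ≥ 1 and 1 ≤ r ≤ n, the set ℙ = {P ∈ ℝ^{n×n} : P² = P and rank(P) = r} of rank-r idempotent (projection) matrices is path-connected. -/
/-!
Any two idempotents of the same rank are conjugate by some invertible matrix `A`, since `A` can be
assembled from isomorphisms between their ranges and between their kernels. So it is enough to join
the standard idempotent `D = diag(1, …, 1, 0, …, 0)` to `A D A⁻¹` for every invertible `A`.

Gaussian elimination factors `A = T Δ T'` with `T`, `T'` products of transvections and `Δ` diagonal.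
A transvection `1 + c E_ij` is joined to `1` by `1 + s c E_ij`, so conjugating by it does not change
the path component; hence `D ∼ T' D T'⁻¹`. Conjugating this whole path by `Δ`, which commutes
with `D`, gives `D = Δ D Δ⁻¹ ∼ Δ T' D T'⁻¹ Δ⁻¹`, and conjugation by `T` again stays in the path
component. In this way `Δ` never has to be deformed, so the signs of its entries (the two
components of `GL n ℝ`) play no role.
-/

open Matrix

/-- The set of idempotent real `n × n` matrices of rank `r`. -/
def rankIdempotents (n r : ℕ) : Set (Matrix (Fin n) (Fin n) ℝ) :=
  {P | P * P = P ∧ P.rank = r}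

/-- Conjugation `P ↦ u P u⁻¹` of matrices by an invertible matrix `u`. -/
def matConj {n : ℕ} (u : (Matrix (Fin n) (Fin n) ℝ)ˣ) (P : Matrix (Fin n) (Fin n) ℝ) :
    Matrix (Fin n) (Fin n) ℝ :=
  u.val * P * (u⁻¹).val

lemma matConj_mul {n : ℕ} (u v : (Matrix (Fin n) (Fin n) ℝ)ˣ) (P : Matrix (Fin n) (Fin n) ℝ) :
    matConj (u * v) P = matConj u (matConj v P) := by
  simp only [matConj, _root_.mul_inv_rev, Units.val_mul, mul_assoc]

lemma matConj_mem {n r : ℕ} (u : (Matrix (Fin n) (Fin n) ℝ)ˣ) {P : Matrix (Fin n) (Fin n) ℝ}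
    (hP : P ∈ rankIdempotents n r) : matConj u P ∈ rankIdempotents n r := by
  obtain ⟨h1, h2⟩ := hP
  refine ⟨?_, ?_⟩
  · calc u.val * P * (u⁻¹).val * (u.val * P * (u⁻¹).val)
        = u.val * P * ((u⁻¹).val * u.val) * P * (u⁻¹).val := by simp only [mul_assoc]
      _ = u.val * (P * P) * (u⁻¹).val := by
          rw [Units.inv_mul, mul_one]; simp only [mul_assoc]
      _ = matConj u P := by rw [h1, matConj]
  · rw [matConj, rank_mul_eq_left_of_isUnit_det _ _ ((isUnit_iff_isUnit_det _).1 (u⁻¹).isUnit),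
      rank_mul_eq_right_of_isUnit_det _ _ ((isUnit_iff_isUnit_det _).1 u.isUnit), h2]

lemma JoinedIn.matConj {n r : ℕ} (u : (Matrix (Fin n) (Fin n) ℝ)ˣ)
    {P Q : Matrix (Fin n) (Fin n) ℝ} (h : JoinedIn (rankIdempotents n r) P Q) :
    JoinedIn (rankIdempotents n r) (matConj u P) (matConj u Q) := by
  have hc : Continuous (_root_.matConj u) := by unfold _root_.matConj; fun_prop
  refine (h.map hc).mono ?_
  rintro _ ⟨R, hR, rfl⟩
  exact matConj_mem u hR

/-- A transvection `1 + c E_ij`, as a unit of the matrix ring. -/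
def transvectionUnit {n : ℕ} {i j : Fin n} (hij : i ≠ j) (c : ℝ) :
    (Matrix (Fin n) (Fin n) ℝ)ˣ where
  val := transvection i j c
  inv := transvection i j (-c)
  val_inv := by rw [transvection_mul_transvection_same _ _ hij]; simp
  inv_val := by rw [transvection_mul_transvection_same _ _ hij]; simp

lemma joinedIn_matConj_transvection {n r : ℕ} {i j : Fin n} (hij : i ≠ j) (c : ℝ)
    {P : Matrix (Fin n) (Fin n) ℝ} (hP : P ∈ rankIdempotents n r) :
    JoinedIn (rankIdempotents n r) P (matConj (transvectionUnit hij c) P) := by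
  refine JoinedIn.ofLine (f := fun s : ℝ => matConj (transvectionUnit hij (s * c)) P)
    (Continuous.continuousOn ?_) ?_ ?_ ?_
  · have h : ∀ g : ℝ → ℝ, Continuous g → Continuous fun s => transvection i j (g s) := by
      intro g hg
      unfold transvection
      refine continuous_const.add ?_
      refine continuous_matrix fun a b => ?_
      simp only [single_apply]
      split_ifs <;> fun_prop
    exact ((h _ (by fun_prop)).mul continuous_const).mul (h _ (by fun_prop))
  · simp [matConj, transvectionUnit]
  · simp
  · rintro _ ⟨s, -, rfl⟩
    exact matConj_mem _ hP

lemma exists_unit_joinedIn_of_list {n r : ℕ} (L : List (TransvectionStruct (Fin n) ℝ)) :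
    ∃ u : (Matrix (Fin n) (Fin n) ℝ)ˣ, u.val = (L.map TransvectionStruct.toMatrix).prod ∧
      ∀ P ∈ rankIdempotents n r, JoinedIn (rankIdempotents n r) P (matConj u P) := by
  induction L with
  | nil => exact ⟨1, by simp, fun P hP => by simpa [matConj] using JoinedIn.refl hP⟩
  | cons t L ih =>
    obtain ⟨u, hu, h⟩ := ih
    refine ⟨transvectionUnit t.hij t.c * u, ?_, fun P hP => ?_⟩
    · simp [hu, transvectionUnit, TransvectionStruct.toMatrix]
    · rw [matConj_mul]
      exact (h P hP).trans (joinedIn_matConj_transvection t.hij t.c (matConj_mem u hP))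

lemma joinedIn_matConj_diagonal {n r : ℕ} (d : Fin n → ℝ)
    (hd : diagonal d ∈ rankIdempotents n r) (A : (Matrix (Fin n) (Fin n) ℝ)ˣ) :
    JoinedIn (rankIdempotents n r) (diagonal d) (matConj A (diagonal d)) := by
  obtain ⟨L, L', w, hA⟩ :=
    Pivot.exists_list_transvec_mul_diagonal_mul_list_transvec A.val
  obtain ⟨u, hu, hu'⟩ := exists_unit_joinedIn_of_list (r := r) L
  obtain ⟨v, hv, hv'⟩ := exists_unit_joinedIn_of_list (r := r) L'
  rw [← hu, ← hv] at hA
  -- The diagonal factor is itself a unit, being a product of units.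
  obtain ⟨δ, rfl⟩ : ∃ δ, A = u * δ * v := ⟨u⁻¹ * A * v⁻¹, by group⟩
  have hδ : δ.val = diagonal w := by
    simpa [Units.val_mul] using hA
  have hfix : matConj δ (diagonal d) = diagonal d := by
    have hcomm : δ.val * diagonal d = diagonal d * δ.val := by
      rw [hδ, diagonal_mul_diagonal, diagonal_mul_diagonal]
      simp only [mul_comm]
    rw [matConj, hcomm, mul_assoc, Units.mul_inv, mul_one]
  rw [matConj_mul, matConj_mul]
  have h1 := (hv' _ hd).matConj δ
  rw [hfix] at h1
  exact h1.trans (hu' _ h1.target_mem)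

/-- Idempotent endomorphisms of equal rank are conjugate: glue an isomorphism of the ranges and an
isomorphism of the kernels along `V = range ⊕ ker`. -/
lemma exists_linearEquiv_conj {V : Type*} [AddCommGroup V] [Module ℝ V] [FiniteDimensional ℝ V]
    {f g : V →ₗ[ℝ] V} (hf : IsIdempotentElem f) (hg : IsIdempotentElem g)
    (h : Module.finrank ℝ f.range = Module.finrank ℝ g.range) :
    ∃ e : V ≃ₗ[ℝ] V, ∀ x, e (f x) = g (e x) := by
  have hk : Module.finrank ℝ f.ker = Module.finrank ℝ g.ker := by
    have h1 := f.finrank_range_add_finrank_ker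
    have h2 := g.finrank_range_add_finrank_ker
    omega
  let φ := LinearEquiv.ofFinrankEq _ _ h
  let ψ := LinearEquiv.ofFinrankEq _ _ hk
  let Ef := Submodule.prodEquivOfIsCompl _ _ (LinearMap.IsIdempotentElem.isCompl hf)
  let Eg := Submodule.prodEquivOfIsCompl _ _ (LinearMap.IsIdempotentElem.isCompl hg)
  refine ⟨Ef.symm.trans ((φ.prodCongr ψ).trans Eg), fun x => ?_⟩
  obtain ⟨⟨a, b⟩, rfl⟩ := Ef.surjective x
  have h1 : f (Ef (a, b)) = Ef (a, 0) := by
    have ha := (LinearMap.IsIdempotentElem.mem_range_iff hf).1 a.2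
    simp [Ef, ha]
  have h2 : ∀ (a : g.range) (b : g.ker), g (Eg (a, b)) = Eg (a, 0) := by
    intro a b
    have ha := (LinearMap.IsIdempotentElem.mem_range_iff hg).1 a.2
    simp [Eg, ha]
  rw [h1]
  simp only [LinearEquiv.trans_apply, LinearEquiv.symm_apply_apply, LinearEquiv.prodCongr_apply,
    map_zero, h2]

lemma exists_unit_matConj_eq {n r : ℕ} {P Q : Matrix (Fin n) (Fin n) ℝ}
    (hP : P ∈ rankIdempotents n r) (hQ : Q ∈ rankIdempotents n r) :
    ∃ A : (Matrix (Fin n) (Fin n) ℝ)ˣ, matConj A P = Q := by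
  have key : ∀ R : Matrix (Fin n) (Fin n) ℝ, R ∈ rankIdempotents n r →
      IsIdempotentElem (toLin' R) := fun R hR => by
    rw [IsIdempotentElem, Module.End.mul_eq_comp, ← toLin'_mul, hR.1]
  obtain ⟨e, he⟩ := exists_linearEquiv_conj (key P hP) (key Q hQ) (by
    have h1 := hP.2
    have h2 := hQ.2
    rw [Matrix.rank, ← toLin'_apply'] at h1 h2
    rw [h1, h2])
  let A : (Matrix (Fin n) (Fin n) ℝ)ˣ :=
    { val := LinearMap.toMatrix' e.toLinearMap
      inv := LinearMap.toMatrix' e.symm.toLinearMap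
      val_inv := by rw [← LinearMap.toMatrix'_comp]; simp
      inv_val := by rw [← LinearMap.toMatrix'_comp]; simp }
  have hA : A.val * P = Q * A.val := by
    apply toLin'.injective
    refine LinearMap.ext fun x => ?_
    simpa [A, toLin'_mul] using he x
  refine ⟨A, ?_⟩
  rw [matConj, hA, mul_assoc, Units.mul_inv, mul_one]

lemma diagonal_mem_rankIdempotents {n r : ℕ} (hrn : r ≤ n) :
    diagonal (fun i : Fin n => if i.val < r then (1 : ℝ) else 0) ∈ rankIdempotents n r := by
  refine ⟨?_, ?_⟩
  · rw [diagonal_mul_diagonal]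
    simp
  · rw [rank_diagonal, Fintype.card_subtype]
    simp [Fin.card_filter_val_lt, hrn]

/-- The set of rank-`r` idempotent (projection) real `n × n` matrices is path-connected,
for `1 ≤ r ≤ n`. -/
theorem stmt_0 (n r : ℕ) (hn : 1 ≤ n) (hr : 1 ≤ r) (hrn : r ≤ n) :
    IsPathConnected {P : Matrix (Fin n) (Fin n) ℝ | P * P = P ∧ P.rank = r} := by
  have hD := diagonal_mem_rankIdempotents hrn
  refine ⟨_, hD, fun {Q} hQ => ?_⟩
  obtain ⟨A, rfl⟩ := exists_unit_matConj_eq hD hQ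
  exact joinedIn_matConj_diagonal _ hD A
end

section
/- Let n ≥ r ≥ 1 and let P ∈ ℝ^{n×n} satisfy P² = P and rank(P) = r. Then there exist matrices U, Q ∈ ℝ^{n×r}, each of full column rank, such that QᵀU is invertible and P = U(QᵀU)^{−1}Qᵀ. In particular, if P = UΣQᵀ is a compact singular value decomposition of P (U, Q ∈ ℝ^{n×r} with orthonormal columns, Σ an invertible r×r diagonal matrix of singular values), then QᵀU = Σ^{−1}. -/
open Matrix

/-! An idempotent `P` of rank `r` restricts to the identity on its range. Choosing coordinates
on the range, the inclusion of the range and the corestriction of `P` to it become matrices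
`U` and `Qᵀ` with `U * Qᵀ = P` and `Qᵀ * U = 1` (`exists_mul_eq_and_mul_eq_one`). These satisfy
the required formula, and both have full rank because the identity factors through them.

For a compact singular value decomposition `P = U S Qᵀ`, cancelling `U` and `Qᵀ` in `P * P = P` by
orthonormality gives `S (Qᵀ U) S = S`, and `S` is invertible. -/

theorem exists_mul_eq_and_mul_eq_one {n r : ℕ} (P : Matrix (Fin n) (Fin n) ℝ)
    (hP : P * P = P) (hrank : P.rank = r) :
    ∃ (U : Matrix (Fin n) (Fin r) ℝ) (V : Matrix (Fin r) (Fin n) ℝ), U * V = P ∧ V * U = 1 := by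
  have hfin : Module.finrank ℝ (LinearMap.range (Matrix.toLin' P)) = r := by
    rw [← hrank]; rfl
  let e := (Module.finBasisOfFinrankEq ℝ _ hfin).equivFun
  refine ⟨LinearMap.toMatrix' ((LinearMap.range (Matrix.toLin' P)).subtype ∘ₗ e.symm.toLinearMap),
    LinearMap.toMatrix' (e.toLinearMap ∘ₗ (Matrix.toLin' P).rangeRestrict), ?_, ?_⟩
  · rw [← LinearMap.toMatrix'_comp]
    conv_rhs => rw [← LinearMap.toMatrix'_toLin' P]
    congr 1
    refine LinearMap.ext fun x => ?_
    simp
  · rw [← LinearMap.toMatrix'_comp, ← LinearMap.toMatrix'_id]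
    congr 1
    refine LinearMap.ext fun x => ?_
    -- A vector of the range has the form `P y`, so idempotence makes `P` fix it.
    have hfix : (Matrix.toLin' P).rangeRestrict (e.symm x : Fin n → ℝ) = e.symm x := by
      obtain ⟨y, hy⟩ := (e.symm x).2
      apply Subtype.ext
      rw [LinearMap.codRestrict_apply, ← hy, ← LinearMap.comp_apply, ← Matrix.toLin'_mul, hP]
    simp only [LinearMap.comp_apply, Submodule.subtype_apply, LinearEquiv.coe_coe, hfix,
      LinearEquiv.apply_symm_apply, LinearMap.id_apply]

/-- Every rank-`r` idempotent `P` factors as `U (Qᵀ U)⁻¹ Qᵀ` with `U, Q` of full column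
rank and `Qᵀ U` invertible; moreover, for any compact SVD `P = U Σ Qᵀ` (with `U, Q` having
orthonormal columns and `Σ` diagonal with positive diagonal entries), one has `Qᵀ U = Σ⁻¹`. -/
theorem stmt_2 (n r : ℕ) (hr : 1 ≤ r) (hrn : r ≤ n)
    (P : Matrix (Fin n) (Fin n) ℝ) (hP : P * P = P) (hrank : P.rank = r) :
    (∃ U Q : Matrix (Fin n) (Fin r) ℝ,
      U.rank = r ∧ Q.rank = r ∧ IsUnit (Qᵀ * U) ∧ P = U * (Qᵀ * U)⁻¹ * Qᵀ) ∧
    (∀ (U Q : Matrix (Fin n) (Fin r) ℝ) (S : Matrix (Fin r) (Fin r) ℝ),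
      Uᵀ * U = 1 → Qᵀ * Q = 1 → S.IsDiag → (∀ i, 0 < S i i) →
      P = U * S * Qᵀ → Qᵀ * U = S⁻¹) := by
  constructor
  · obtain ⟨U, V, hUV, hVU⟩ := exists_mul_eq_and_mul_eq_one P hP hrank
    have h1 : (V * U).rank = r := by rw [hVU, Matrix.rank_one, Fintype.card_fin]
    refine ⟨U, Vᵀ, ?_, ?_, ?_, ?_⟩
    · exact le_antisymm (Matrix.rank_le_width U) (h1.symm.le.trans (Matrix.rank_mul_le_right V U))
    · rw [Matrix.rank_transpose]
      exact le_antisymm (Matrix.rank_le_height V) (h1.symm.le.trans (Matrix.rank_mul_le_left V U))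
    · rw [transpose_transpose, hVU]
      exact isUnit_one
    · rw [transpose_transpose, hVU, inv_one, Matrix.mul_one, hUV]
  · intro U Q S hU hQ hS hpos hPS
    have hdet : IsUnit S.det := by
      rw [← hS.diagonal_diag, det_diagonal]
      exact (Finset.prod_pos fun i _ => hpos i).ne'.isUnit
    have hcancel : S * (Qᵀ * U) * S = S := by
      calc S * (Qᵀ * U) * S = (Uᵀ * U) * S * (Qᵀ * U) * S * (Qᵀ * Q) := by
            rw [hU, hQ, Matrix.one_mul, Matrix.mul_one]
        _ = Uᵀ * (P * P) * Q := by rw [hPS]; simp only [Matrix.mul_assoc]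
        _ = (Uᵀ * U) * S * (Qᵀ * Q) := by rw [hP, hPS]; simp only [Matrix.mul_assoc]
        _ = S := by rw [hU, hQ, Matrix.one_mul, Matrix.mul_one]
    have hright : S * (Qᵀ * U) = 1 := by
      have h := congrArg (· * S⁻¹) hcancel
      simpa only [Matrix.mul_nonsing_inv_cancel_right _ _ hdet, Matrix.mul_nonsing_inv _ hdet]
        using h
    exact (Matrix.inv_eq_right_inv hright).symm
end

section
/- Let n ≥ r ≥ 1 and let Φ, Ψ ∈ ℝ^{n×r} have full column rank. Then det(ΨᵀΦ)² ≤ det(ΦᵀΦ)·det(ΨᵀΨ), and equality holds if and only if Range(Φ) = Range(Ψ). Equivalently, the regularization value ρ(Φ,Ψ) = −log( det(ΨᵀΦ)² / (det(ΦᵀΦ) det(ΨᵀΨ)) ) is nonnegative whenever det(ΨᵀΦ) ≠ 0, and vanishes exactly when the column spaces of Φ and Ψ coincide. -/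
/-!
Put `X = (ΨᵀΨ)⁻¹ΨᵀΦ`, so that `ΨX` is the orthogonal projection of the columns of `Φ` onto
`Range Ψ`, and let `E = Φ - ΨX` be the residual. Since `ΨᵀE = 0`, Pythagoras gives
`ΦᵀΦ = XᵀΨᵀΨX + EᵀE`, while `det (XᵀΨᵀΨX) · det (ΨᵀΨ) = det (ΨᵀΦ)²`. The inequality is therefore
monotonicity of the determinant under adding the positive semidefinite matrix `EᵀE`
(`det_le_det_add`). Since `ΦᵀΦ` is positive definite, that monotonicity is strict unless `EᵀE = 0`
(`eq_zero_of_det_add_eq`), i.e. unless `Φ = ΨX`. For matrices of equal rank the latter says that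
the ranges coincide.

Monotonicity and its equality case both come from `1 + tr M ≤ det (1 + M)` for positive semidefinite
`M` (`one_add_trace_le_det`), after writing `S = CᵀC` with `C` invertible and
`S + P = Cᵀ (1 + M) C`; for singular `S` the inequality only says `0 ≤ det (S + P)`.
-/

open Matrix

theorem one_add_sum_le_prod {ι : Type*} (s : Finset ι) (f : ι → ℝ) (hf : ∀ i, 0 ≤ f i) :
    1 + ∑ i ∈ s, f i ≤ ∏ i ∈ s, (1 + f i) := by
  classical
  induction s using Finset.induction_on with
  | empty => simp
  | insert a s ha ih =>
    rw [Finset.sum_insert ha, Finset.prod_insert ha]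
    nlinarith [hf a, Finset.sum_nonneg (fun i (_ : i ∈ s) => hf i),
      mul_nonneg (hf a) (Finset.sum_nonneg (fun i (_ : i ∈ s) => hf i)),
      mul_le_mul_of_nonneg_left ih (hf a)]

/-- Diagonalizing `M`, this is `1 + ∑ λᵢ ≤ ∏ (1 + λᵢ)` for the eigenvalues `λᵢ ≥ 0`. -/
theorem one_add_trace_le_det {r : ℕ} {M : Matrix (Fin r) (Fin r) ℝ} (hM : M.PosSemidef) :
    1 + M.trace ≤ (1 + M).det := by
  have hdet : (1 + M).det = ∏ i, (1 + hM.isHermitian.eigenvalues i) := by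
    conv_lhs => rw [hM.isHermitian.spectral_theorem]
    rw [← map_one (Unitary.conjStarAlgAut ℝ (Matrix (Fin r) (Fin r) ℝ)
        hM.isHermitian.eigenvectorUnitary),
      ← map_add, ← diagonal_one, diagonal_add, Unitary.conjStarAlgAut_apply, det_mul_right_comm]
    simp
  rw [hdet, hM.isHermitian.trace_eq_sum_eigenvalues]
  exact one_add_sum_le_prod _ _ hM.eigenvalues_nonneg

theorem mulVec_inj {n r : ℕ} {A : Matrix (Fin n) (Fin r) ℝ} (h : A.rank = r) :
    Function.Injective A.mulVec := by
  have h1 := A.mulVecLin.finrank_range_add_finrank_ker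
  rw [← Matrix.rank, h] at h1
  have : LinearMap.ker A.mulVecLin = ⊥ := by
    apply Submodule.finrank_eq_zero.mp
    simpa using h1
  exact LinearMap.ker_eq_bot.mp this

/-- The `j`-th column of `X` holds the coordinates of the `j`-th column of `Φ` in terms of the
columns of `Ψ`. -/
theorem factor_of_range_le {n r : ℕ} {Φ Ψ : Matrix (Fin n) (Fin r) ℝ}
    (h : LinearMap.range Φ.mulVecLin ≤ LinearMap.range Ψ.mulVecLin) :
    ∃ X : Matrix (Fin r) (Fin r) ℝ, Φ = Ψ * X := by
  have h1 : ∀ j, ∃ x, Ψ *ᵥ x = Φ.col j := fun j => by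
    obtain ⟨x, hx⟩ := h ⟨Pi.single j 1, rfl⟩
    exact ⟨x, by simpa using hx⟩
  choose x hx using h1
  refine ⟨(Matrix.of x)ᵀ, ?_⟩
  ext i j
  exact (congrFun (hx j) i).symm

/-- Adding a positive semidefinite `P` to a positive definite `S` multiplies the determinant by
some `det (1 + M) ≥ 1 + tr M`, where `M` is congruent to `P`. -/
theorem exists_congruent {r : ℕ} {S P : Matrix (Fin r) (Fin r) ℝ} (hS : S.PosDef)
    (hP : P.PosSemidef) :
    ∃ C M : Matrix (Fin r) (Fin r) ℝ, M.PosSemidef ∧ P = Cᵀ * M * C ∧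
      (S + P).det = S.det * (1 + M).det := by
  obtain ⟨C, hC⟩ : ∃ C : Matrix (Fin r) (Fin r) ℝ, S = Cᵀ * C := by
    open scoped MatrixOrder in
    obtain ⟨C, hC⟩ := CStarAlgebra.nonneg_iff_eq_star_mul_self.mp hS.posSemidef.nonneg
    exact ⟨C, by simpa [star_eq_conjTranspose] using hC⟩
  have hdet : S.det = C.det * C.det := by rw [hC, det_mul, det_transpose]
  have hCu : IsUnit C.det := by
    rw [isUnit_iff_ne_zero]
    intro h
    have := hS.det_pos
    simp [hdet, h] at this
  have hCtu : IsUnit Cᵀ.det := by rwa [det_transpose]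
  have hPC : P = Cᵀ * (C⁻¹ᵀ * P * C⁻¹) * C := by
    rw [transpose_nonsing_inv]
    calc P = (Cᵀ * Cᵀ⁻¹) * P * (C⁻¹ * C) := by
          rw [mul_nonsing_inv _ hCtu, nonsing_inv_mul _ hCu, one_mul, mul_one]
      _ = _ := by simp only [Matrix.mul_assoc]
  refine ⟨C, C⁻¹ᵀ * P * C⁻¹, by simpa using hP.conjTranspose_mul_mul_same C⁻¹, hPC, ?_⟩
  have hsum : S + P = Cᵀ * (1 + C⁻¹ᵀ * P * C⁻¹) * C := by
    rw [Matrix.mul_add, Matrix.add_mul, ← hPC, mul_one, hC]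
  rw [hsum, det_mul, det_mul, det_transpose, hdet]
  ring

theorem det_le_det_add {r : ℕ} {S P : Matrix (Fin r) (Fin r) ℝ} (hS : S.PosSemidef)
    (hP : P.PosSemidef) : S.det ≤ (S + P).det := by
  by_cases h : S.det = 0
  · rw [h]
    exact (hS.add hP).det_nonneg
  · have hS' := hS.posDef_iff_det_ne_zero.mpr h
    obtain ⟨C, M, hM, -, hdet⟩ := exists_congruent hS' hP
    rw [hdet]
    have h1 := one_add_trace_le_det hM
    have h2 := hM.trace_nonneg
    exact le_mul_of_one_le_right hS'.det_pos.le (by linarith)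

theorem eq_zero_of_det_add_eq {r : ℕ} {S P : Matrix (Fin r) (Fin r) ℝ} (hS : S.PosDef)
    (hP : P.PosSemidef) (h : S.det = (S + P).det) : P = 0 := by
  obtain ⟨C, M, hM, hPM, hdet⟩ := exists_congruent hS hP
  have h1 := one_add_trace_le_det hM
  have h2 := hM.trace_nonneg
  have h3 : (1 + M).det = 1 := by
    rw [hdet] at h
    exact (mul_eq_left₀ hS.det_pos.ne').mp h.symm
  have hM0 : M = 0 := hM.trace_eq_zero_iff.mp (by linarith)
  rw [hPM, hM0, Matrix.mul_zero, Matrix.zero_mul]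

theorem gram_posDef {n r : ℕ} {A : Matrix (Fin n) (Fin r) ℝ} (h : A.rank = r) :
    (Aᵀ * A).PosDef := by
  simpa using PosDef.conjTranspose_mul_self A (mulVec_inj h)

/-- Splitting `Φ` into its projection `Ψ * X` and a residual `E` orthogonal to `Ψ`. -/
theorem exists_projection {n r : ℕ} (Φ : Matrix (Fin n) (Fin r) ℝ)
    {Ψ : Matrix (Fin n) (Fin r) ℝ} (hΨ : Ψ.rank = r) :
    ∃ (X : Matrix (Fin r) (Fin r) ℝ) (E : Matrix (Fin n) (Fin r) ℝ),
      Φ = Ψ * X + E ∧ Ψᵀ * E = 0 := by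
  refine ⟨(Ψᵀ * Ψ)⁻¹ * (Ψᵀ * Φ), Φ - Ψ * ((Ψᵀ * Ψ)⁻¹ * (Ψᵀ * Φ)), by simp, ?_⟩
  rw [Matrix.mul_sub, ← Matrix.mul_assoc Ψᵀ Ψ,
    mul_nonsing_inv_cancel_left _ _ (gram_posDef hΨ).det_pos.ne'.isUnit, sub_self]

theorem gram_det_inequality {n r : ℕ} {Φ Ψ : Matrix (Fin n) (Fin r) ℝ}
    (hΦ : Φ.rank = r) (hΨ : Ψ.rank = r) :
    (Ψᵀ * Φ).det ^ 2 ≤ (Φᵀ * Φ).det * (Ψᵀ * Ψ).det ∧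
    ((Ψᵀ * Φ).det ^ 2 = (Φᵀ * Φ).det * (Ψᵀ * Ψ).det ↔
      LinearMap.range Φ.mulVecLin = LinearMap.range Ψ.mulVecLin) := by
  obtain ⟨X, E, hE, hort⟩ := exists_projection Φ hΨ
  have hort' : Eᵀ * Ψ = 0 := by simpa using congrArg transpose hort
  have hB := (gram_posDef hΨ).det_pos
  have hA := (gram_posDef hΦ).det_pos
  have hG : Ψᵀ * Φ = Ψᵀ * Ψ * X := by
    rw [hE, Matrix.mul_add, hort, add_zero, Matrix.mul_assoc]
  have hgram : Φᵀ * Φ = (Ψ * X)ᵀ * (Ψ * X) + Eᵀ * E := by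
    have h1 : (Ψ * X)ᵀ * E = 0 := by rw [transpose_mul, Matrix.mul_assoc, hort, Matrix.mul_zero]
    have h2 : Eᵀ * (Ψ * X) = 0 := by rw [← Matrix.mul_assoc, hort', Matrix.zero_mul]
    rw [hE, transpose_add, Matrix.add_mul, Matrix.mul_add, Matrix.mul_add, h1, h2]
    simp
  have hS : ((Ψ * X)ᵀ * (Ψ * X)).PosSemidef := by
    simpa using posSemidef_conjTranspose_mul_self (Ψ * X)
  have hP : (Eᵀ * E).PosSemidef := by simpa using posSemidef_conjTranspose_mul_self E
  have hSdet : (Ψᵀ * Φ).det ^ 2 = ((Ψ * X)ᵀ * (Ψ * X)).det * (Ψᵀ * Ψ).det := by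
    have : (Ψ * X)ᵀ * (Ψ * X) = Xᵀ * (Ψᵀ * Ψ) * X := by
      simp only [transpose_mul, Matrix.mul_assoc]
    rw [hG, this, det_mul, det_mul, det_mul, det_transpose]
    ring
  refine ⟨?_, fun h => ?_, fun h => ?_⟩
  · rw [hSdet, hgram]
    exact mul_le_mul_of_nonneg_right (det_le_det_add hS hP) hB.le
  · have hdet := mul_right_cancel₀ hB.ne' (hSdet.symm.trans h)
    have hSpd := hS.posDef_iff_det_ne_zero.mpr (hdet ▸ hA.ne')
    rw [hgram] at hdet
    have h0 := eq_zero_of_det_add_eq hSpd hP hdet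
    have hE0 : E = 0 := conjTranspose_mul_self_eq_zero.mp (by simpa using h0)
    apply Submodule.eq_of_le_of_finrank_eq
    · rw [hE, hE0, add_zero, mulVecLin_mul]
      exact LinearMap.range_comp_le_range _ _
    · exact hΦ.trans hΨ.symm
  · obtain ⟨Y, rfl⟩ := factor_of_range_le h.le
    have h1 : (Ψ * Y)ᵀ * (Ψ * Y) = Yᵀ * (Ψᵀ * Ψ) * Y := by
      simp only [transpose_mul, Matrix.mul_assoc]
    rw [h1, ← Matrix.mul_assoc, det_mul, det_mul, det_mul, det_transpose]
    ring

/-- Cauchy–Schwarz-type determinant inequality: `det(ΨᵀΦ)² ≤ det(ΦᵀΦ) det(ΨᵀΨ)`, with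
equality iff the column spaces of `Φ` and `Ψ` coincide; equivalently the regularization
`ρ(Φ,Ψ) = -log(det(ΨᵀΦ)² / (det(ΦᵀΦ) det(ΨᵀΨ)))` is nonnegative whenever `det(ΨᵀΦ) ≠ 0`
and vanishes exactly when the column spaces coincide. -/
theorem stmt_6 (n r : ℕ) (hr : 1 ≤ r) (hrn : r ≤ n)
    (Φ Ψ : Matrix (Fin n) (Fin r) ℝ) (hΦ : Φ.rank = r) (hΨ : Ψ.rank = r) :
    (Ψᵀ * Φ).det ^ 2 ≤ (Φᵀ * Φ).det * (Ψᵀ * Ψ).det ∧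
    ((Ψᵀ * Φ).det ^ 2 = (Φᵀ * Φ).det * (Ψᵀ * Ψ).det ↔
      LinearMap.range Φ.mulVecLin = LinearMap.range Ψ.mulVecLin) ∧
    ((Ψᵀ * Φ).det ≠ 0 →
      0 ≤ -Real.log ((Ψᵀ * Φ).det ^ 2 / ((Φᵀ * Φ).det * (Ψᵀ * Ψ).det)) ∧
      (-Real.log ((Ψᵀ * Φ).det ^ 2 / ((Φᵀ * Φ).det * (Ψᵀ * Ψ).det)) = 0 ↔
        LinearMap.range Φ.mulVecLin = LinearMap.range Ψ.mulVecLin)) := by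
  obtain ⟨hle, hiff⟩ := gram_det_inequality hΦ hΨ
  refine ⟨hle, hiff, fun hne => ?_⟩
  have hpos := mul_pos (gram_posDef hΦ).det_pos (gram_posDef hΨ).det_pos
  have hq : 0 < (Ψᵀ * Φ).det ^ 2 / ((Φᵀ * Φ).det * (Ψᵀ * Ψ).det) := by positivity
  refine ⟨neg_nonneg.mpr (Real.log_nonpos hq.le ((div_le_one hpos).mpr hle)), ?_⟩
  rw [← hiff, neg_eq_zero, ← div_eq_one_iff_eq hpos.ne']
  refine ⟨fun h => Real.eq_one_of_pos_of_log_eq_zero hq h, fun h => ?_⟩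
  rw [h, Real.log_one]
end

section
/- Let n ≥ r ≥ 1. Suppose (Φ_k)_{k≥1}, (Ψ_k)_{k≥1} are sequences of full-column-rank n×r real matrices with det(Ψ_kᵀΦ_k) ≠ 0 for all k, converging to full-column-rank matrices Φ_0, Ψ_0 with det(Ψ_0ᵀΦ_0) = 0. Then det(Ψ_kᵀΦ_k)² / ( det(Φ_kᵀΦ_k) det(Ψ_kᵀΨ_k) ) → 0 as k → ∞; equivalently, the regularization value ρ(Φ_k,Ψ_k) = −log( det(Ψ_kᵀΦ_k)² / (det(Φ_kᵀΦ_k) det(Ψ_kᵀΨ_k)) ) tends to +∞. -/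
/-!
The Gram determinants `det (AᵀA)` are nonzero at every full-column-rank `A`, so the ratio
`det (ΨᵀΦ)² / (det (ΦᵀΦ) det (ΨᵀΨ))` is continuous at `(Φ₀, Ψ₀)`, where it vanishes. Along the
sequence it is nonzero, so it tends to `0` within the punctured neighbourhood, and there
`Real.log` tends to `-∞`.
-/

open Matrix Filter

theorem gram_det_ne_zero {n r : ℕ} {A : Matrix (Fin n) (Fin r) ℝ} (h : A.rank = r) :
    (Aᵀ * A).det ≠ 0 := by
  rw [← isUnit_iff_ne_zero, ← Matrix.isUnit_iff_isUnit_det,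
    ← Matrix.linearIndependent_cols_iff_isUnit, linearIndependent_iff_card_eq_finrank_span,
    Set.finrank, ← Matrix.rank_eq_finrank_span_cols, Matrix.rank_transpose_mul_self, h,
    Fintype.card_fin]

theorem tendsto_gram_det {n r : ℕ} {A B : ℕ → Matrix (Fin n) (Fin r) ℝ}
    {A₀ B₀ : Matrix (Fin n) (Fin r) ℝ}
    (hA : Tendsto A atTop (nhds A₀)) (hB : Tendsto B atTop (nhds B₀)) :
    Tendsto (fun k => ((A k)ᵀ * B k).det) atTop (nhds (A₀ᵀ * B₀).det) := by
  have hc : Continuous fun p : Matrix (Fin n) (Fin r) ℝ × Matrix (Fin n) (Fin r) ℝ =>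
      (p.1ᵀ * p.2).det :=
    (continuous_fst.matrix_transpose.matrix_mul continuous_snd).matrix_det
  have hAB : Tendsto (fun k => (A k, B k)) atTop (nhds (A₀, B₀)) := hA.prodMk_nhds hB
  have h := (hc.tendsto (A₀, B₀)).comp hAB
  exact h

/-- Blow-up of the regularization: if full-column-rank pairs `(Φ_k, Ψ_k)` with
`det(Ψ_kᵀ Φ_k) ≠ 0` converge to a full-column-rank pair with `det(Ψ₀ᵀ Φ₀) = 0`, then the
normalized determinant ratio tends to `0`, equivalently `ρ(Φ_k, Ψ_k) → +∞`. -/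
theorem stmt_7 (n r : ℕ) (hr : 1 ≤ r) (hrn : r ≤ n)
    (Φ Ψ : ℕ → Matrix (Fin n) (Fin r) ℝ) (Φ₀ Ψ₀ : Matrix (Fin n) (Fin r) ℝ)
    (hΦk : ∀ k, (Φ k).rank = r) (hΨk : ∀ k, (Ψ k).rank = r)
    (hdk : ∀ k, ((Ψ k)ᵀ * Φ k).det ≠ 0)
    (hΦ₀ : Φ₀.rank = r) (hΨ₀ : Ψ₀.rank = r)
    (hΦlim : Tendsto Φ atTop (nhds Φ₀)) (hΨlim : Tendsto Ψ atTop (nhds Ψ₀))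
    (hd₀ : (Ψ₀ᵀ * Φ₀).det = 0) :
    Tendsto (fun k => ((Ψ k)ᵀ * Φ k).det ^ 2 /
        (((Φ k)ᵀ * Φ k).det * ((Ψ k)ᵀ * Ψ k).det)) atTop (nhds 0) ∧
    Tendsto (fun k => -Real.log (((Ψ k)ᵀ * Φ k).det ^ 2 /
        (((Φ k)ᵀ * Φ k).det * ((Ψ k)ᵀ * Ψ k).det))) atTop atTop := by
  have hlim : Tendsto (fun k => ((Ψ k)ᵀ * Φ k).det ^ 2 /
      (((Φ k)ᵀ * Φ k).det * ((Ψ k)ᵀ * Ψ k).det)) atTop (nhds 0) := by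
    have h1 := tendsto_gram_det hΨlim hΦlim
    have h2 := tendsto_gram_det hΦlim hΦlim
    have h3 := tendsto_gram_det hΨlim hΨlim
    rw [hd₀] at h1
    have h := (h1.pow 2).div (h2.mul h3)
      (mul_ne_zero (gram_det_ne_zero hΦ₀) (gram_det_ne_zero hΨ₀))
    rwa [zero_pow two_ne_zero, zero_div] at h
  refine ⟨hlim, tendsto_neg_atBot_atTop.comp (Real.tendsto_log_nhdsNE_zero.comp
    (tendsto_nhdsWithin_iff.2 ⟨hlim, Eventually.of_forall fun k => ?_⟩))⟩
  exact div_ne_zero (pow_ne_zero 2 (hdk k))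
    (mul_ne_zero (gram_det_ne_zero (hΦk k)) (gram_det_ne_zero (hΨk k)))
end

section
/- Let n ≥ 1, t_0 < t_f, and let f : ℝⁿ × ℝ → ℝⁿ be continuous with continuous partial derivatives with respect to the first (state) argument on ℝⁿ × [t_0, t_f]. Fix x_0 ∈ ℝⁿ. Then the set 𝒟 of matrices P ∈ ℝ^{n×n} for which the initial value problem dx/dt = P f(x(t), t), x(t_0) = P x_0 admits a solution x : [t_0, t_f] → ℝⁿ on the whole interval [t_0, t_f] is an open subset of ℝ^{n×n}. -/
/-!
The vector field `f` is replaced by `g y t = f (clampBox R y) t`, where `clampBox R` is the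
coordinatewise retraction of `ℝⁿ` (with the sup norm) onto the box `[-R, R]ⁿ`. On
`ℝⁿ × [t0, tf]` the field `g` is bounded and Lipschitz in the state, uniformly in time, so by
Picard–Lindelöf *every* initial value problem `y' = Q g(y, t)`, `y t0 = Q x0` has a solution on all
of `[t0, tf]` (`exists_solution_of_bounded_lipschitz`).

If `x` solves the problem for `P` and `R ≥ ‖x‖ + 1` on `[t0, tf]`, then `x` also solves
the problem for `g`. By Grönwall, the truncated solution `y` for `Q` satisfies `‖x - y‖ ≤ 1` once
`Q` is close enough to `P`; then `y` stays in the box, where `g = f`, so `y` solves the original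
problem for `Q`.
-/

open Set Metric Filter Topology
open scoped NNReal

/-- Coordinatewise clamping to `[-R, R]`: for `0 ≤ R`, a `1`-Lipschitz retraction of `Fin n → ℝ`
(with the sup norm) onto the closed ball of radius `R`. -/
def clampBox {n : ℕ} (R : ℝ) (y : Fin n → ℝ) : Fin n → ℝ := fun i => max (-R) (min R (y i))

lemma lipschitzWith_clampBox {n : ℕ} (R : ℝ) : LipschitzWith 1 (clampBox (n := n) R) := by
  refine LipschitzWith.of_dist_le_mul fun y z => ?_
  rw [NNReal.coe_one, one_mul]
  refine (dist_pi_le_iff dist_nonneg).2 fun i => ?_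
  have h : LipschitzWith 1 fun y : Fin n → ℝ => max (-R) (min R (y i)) :=
    ((LipschitzWith.eval i).const_min R).const_max (-R)
  simpa [clampBox] using h.dist_le_mul y z

lemma clampBox_mem {n : ℕ} {R : ℝ} (hR : 0 ≤ R) (y : Fin n → ℝ) :
    clampBox R y ∈ closedBall (0 : Fin n → ℝ) R := by
  rw [mem_closedBall_zero_iff, pi_norm_le_iff_of_nonneg hR]
  intro i
  rw [Real.norm_eq_abs, abs_le]
  exact ⟨le_max_left _ _, max_le (by linarith) (min_le_left _ _)⟩

lemma clampBox_of_norm_le {n : ℕ} {R : ℝ} {y : Fin n → ℝ} (hy : ‖y‖ ≤ R) :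
    clampBox R y = y := by
  funext i
  have h := (norm_le_pi_norm y i).trans hy
  rw [Real.norm_eq_abs, abs_le] at h
  simp [clampBox, h.1, h.2]

/-- Picard–Lindelöf on a whole time interval: if the field is bounded by `M` on the whole space, a
ball of radius `M * (tf - t0)` cannot be left during `[t0, tf]`. -/
lemma exists_solution_of_bounded_lipschitz {E : Type*} [NormedAddCommGroup E] [NormedSpace ℝ E]
    [CompleteSpace E] {t0 tf : ℝ} (ht : t0 ≤ tf) {v : ℝ → E → E} {K M : ℝ≥0}
    (hl : ∀ t ∈ Icc t0 tf, LipschitzWith K (v t))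
    (hc : ∀ x, ContinuousOn (v · x) (Icc t0 tf))
    (hb : ∀ t ∈ Icc t0 tf, ∀ x, ‖v t x‖ ≤ M) (x0 : E) :
    ∃ y : ℝ → E, y t0 = x0 ∧
      ∀ t ∈ Icc t0 tf, HasDerivWithinAt y (v t (y t)) (Icc t0 tf) t := by
  have h : IsPicardLindelof v (⟨t0, left_mem_Icc.2 ht⟩ : Icc t0 tf) x0
      (M * (tf - t0).toNNReal) 0 M K :=
    { lipschitzOnWith := fun t h => (hl t h).lipschitzOnWith
      continuousOn := fun x _ => hc x
      norm_le := fun t h x _ => hb t h x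
      mul_max_le := by
        have : 0 ≤ tf - t0 := sub_nonneg.2 ht
        simp [this] }
  exact h.exists_eq_forall_mem_Icc_hasDerivWithinAt₀

theorem stmt_9 (n : ℕ) (hn : 1 ≤ n) (t0 tf : ℝ) (ht : t0 < tf)
    (f : (Fin n → ℝ) → ℝ → (Fin n → ℝ))
    (f' : (Fin n → ℝ) → ℝ → ((Fin n → ℝ) →L[ℝ] (Fin n → ℝ)))
    (hf : ContinuousOn (fun p : (Fin n → ℝ) × ℝ => f p.1 p.2)
      (Set.univ ×ˢ Set.Icc t0 tf))
    (hf' : ∀ t ∈ Set.Icc t0 tf, ∀ x, HasFDerivAt (fun y => f y t) (f' x t) x)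
    (hf'c : ContinuousOn (fun p : (Fin n → ℝ) × ℝ => f' p.1 p.2)
      (Set.univ ×ˢ Set.Icc t0 tf))
    (x0 : Fin n → ℝ) :
    IsOpen {P : Matrix (Fin n) (Fin n) ℝ |
      ∃ x : ℝ → (Fin n → ℝ), x t0 = P.mulVec x0 ∧
        ∀ t ∈ Set.Icc t0 tf,
          HasDerivWithinAt x (P.mulVec (f (x t) t)) (Set.Icc t0 tf) t} := by
  rw [isOpen_iff_mem_nhds]
  rintro P ⟨x, hx0, hx⟩
  have hxc : ContinuousOn x (Icc t0 tf) := fun t h => (hx t h).continuousWithinAt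
  obtain ⟨R₀, hR₀⟩ := isCompact_Icc.exists_bound_of_continuousOn hxc
  have hR₀0 : 0 ≤ R₀ := (norm_nonneg _).trans (hR₀ t0 (left_mem_Icc.2 ht.le))
  set R := R₀ + 1 with hR
  have hR0 : 0 ≤ R := by positivity
  have hcpt : IsCompact (closedBall (0 : Fin n → ℝ) R ×ˢ Icc t0 tf) :=
    (isCompact_closedBall _ _).prod isCompact_Icc
  have hsub : closedBall (0 : Fin n → ℝ) R ×ˢ Icc t0 tf ⊆ univ ×ˢ Icc t0 tf :=
    prod_mono (subset_univ _) subset_rfl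
  obtain ⟨M₀, hM₀⟩ := hcpt.exists_bound_of_continuousOn (hf.mono hsub)
  obtain ⟨C₀, hC₀⟩ := hcpt.exists_bound_of_continuousOn (hf'c.mono hsub)
  set M := M₀.toNNReal
  set C := C₀.toNNReal
  have hfl : ∀ t ∈ Icc t0 tf, LipschitzOnWith C (fun y => f y t) (closedBall 0 R) :=
    fun t h => (convex_closedBall (0 : Fin n → ℝ) R).lipschitzOnWith_of_nnnorm_hasFDerivWithin_le
      (f' := fun y => f' y t)
      (fun y _ => (hf' t h y).hasFDerivWithinAt)
      (fun y hy => by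
        rw [← NNReal.coe_le_coe, coe_nnnorm]
        exact (hC₀ (y, t) ⟨hy, h⟩).trans (Real.le_coe_toNNReal _))
  have hgl : ∀ t ∈ Icc t0 tf, LipschitzWith C (fun y => f (clampBox R y) t) := by
    intro t h
    have := (hfl t h).comp ((lipschitzWith_clampBox R).lipschitzOnWith (s := univ))
      (fun y _ => clampBox_mem hR0 y)
    rw [mul_one, lipschitzOnWith_univ] at this
    exact this
  have hgb : ∀ t ∈ Icc t0 tf, ∀ y, ‖f (clampBox R y) t‖ ≤ M := fun t h y =>
    (hM₀ (clampBox R y, t) ⟨clampBox_mem hR0 y, h⟩).trans (Real.le_coe_toNNReal _)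
  have hgc : ∀ y, ContinuousOn (fun t => f (clampBox R y) t) (Icc t0 tf) := fun y =>
    hf.comp (f := fun t => (clampBox R y, t)) (by fun_prop) (fun t h => ⟨mem_univ _, h⟩)
  -- Matrices carry no global norm; distances between them are measured by the operator norm.
  let A : Matrix (Fin n) (Fin n) ℝ →ₗ[ℝ] ((Fin n → ℝ) →L[ℝ] (Fin n → ℝ)) :=
    (Matrix.toLin'.trans LinearMap.toContinuousLinearMap).toLinearMap
  have hA : ∀ Q v, A Q v = Q.mulVec v := fun Q v => by simp [A]
  have hAc : Continuous A := A.continuous_of_finiteDimensional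
  have hlip : ∀ Q, ∀ t ∈ Icc t0 tf,
      LipschitzWith (‖A Q‖₊ * C) (fun y => A Q (f (clampBox R y) t)) :=
    fun Q t h => (A Q).lipschitz.comp (hgl t h)
  have hsmall : ∀ᶠ Q in 𝓝 P, gronwallBound ‖A P x0 - A Q x0‖ (‖A P‖₊ * C : ℝ≥0)
      (0 + ‖A Q - A P‖ * M) (tf - t0) < 1 := by
    have hcont : Continuous fun Q => gronwallBound ‖A P x0 - A Q x0‖ (‖A P‖₊ * C : ℝ≥0)
        (0 + ‖A Q - A P‖ * M) (tf - t0) := by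
      unfold gronwallBound
      split_ifs <;> fun_prop
    refine hcont.continuousAt.eventually_lt continuousAt_const ?_
    simp [gronwallBound_ε0_δ0]
  filter_upwards [hsmall] with Q hQ
  obtain ⟨y, hy0, hy⟩ := exists_solution_of_bounded_lipschitz ht.le
    (v := fun t y => A Q (f (clampBox R y) t)) (M := ‖A Q‖₊ * M) (hlip Q)
    (fun y => (A Q).continuous.comp_continuousOn (hgc y))
    (fun t h y => by
      rw [NNReal.coe_mul, coe_nnnorm]
      exact (A Q).le_opNorm_of_le (hgb t h y)) (A Q x0)
  have hright : ∀ {z : ℝ → Fin n → ℝ} {z' : Fin n → ℝ} {t : ℝ}, t ∈ Ico t0 tf →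
      HasDerivWithinAt z z' (Icc t0 tf) t → HasDerivWithinAt z z' (Ici t) t := fun h hz =>
    hz.mono_of_mem_nhdsWithin (mem_of_superset (Icc_mem_nhdsGE h.2) (Icc_subset_Icc_left h.1))
  have hdist := dist_le_of_approx_trajectories_ODE_of_mem (a := t0) (b := tf)
    (v := fun t y => A P (f (clampBox R y) t)) (s := fun _ => univ)
    (f := x) (g := y) (εf := 0) (εg := ‖A Q - A P‖ * M) (δ := ‖A P x0 - A Q x0‖)
    (fun t h => (hlip P t (Ico_subset_Icc_self h)).lipschitzOnWith)
    hxc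
    (fun t h => hright h (hx t (Ico_subset_Icc_self h)))
    (fun t h => by
      have : ‖x t‖ ≤ R := (hR₀ t (Ico_subset_Icc_self h)).trans (by linarith)
      simp [clampBox_of_norm_le this, hA])
    (fun t _ => mem_univ _)
    (fun t h => (hy t h).continuousWithinAt)
    (fun t h => hright h (hy t (Ico_subset_Icc_self h)))
    (fun t h => by
      rw [dist_eq_norm, ← sub_apply]
      exact (A Q - A P).le_opNorm_of_le (hgb t (Ico_subset_Icc_self h) _))
    (fun t _ => mem_univ _)
    (by rw [hx0, hy0, dist_eq_norm, ← hA])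
  have hyR : ∀ t ∈ Icc t0 tf, ‖y t‖ ≤ R := by
    intro t h
    have h1 : dist (x t) (y t) ≤ 1 :=
      (hdist t h).trans <| (gronwallBound_mono (norm_nonneg _) (by positivity) (by positivity)
        (by linarith [h.2])).trans hQ.le
    rw [dist_comm, dist_eq_norm] at h1
    linarith [norm_le_norm_sub_add (y t) (x t), hR₀ t h]
  refine ⟨y, by rw [hy0, hA], fun t h => ?_⟩
  have := hy t h
  rwa [clampBox_of_norm_le (hyR t h), hA] at this
end

section
/- Let n ≥ 1, t_0 < t_f, and let f : ℝⁿ × ℝ → ℝⁿ be continuous with continuous partial derivatives with respect to the state argument on ℝⁿ × [t_0, t_f]. Fix x_0 ∈ ℝⁿ. Suppose (P_k)_{k≥1} ⊂ ℝ^{n×n} converges to P_0 ∈ ℝ^{n×n}, that for each k the initial value problem dx/dt = P_k f(x(t), t), x(t_0) = P_k x_0 has a solution x̂_k on all of [t_0, t_f], and that the corresponding problem for P_0 has no solution on all of [t_0, t_f]. Then max_{t ∈ [t_0, t_f]} ‖x̂_k(t)‖ → ∞ as k → ∞. -/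
/-!
Suppose the maxima do not tend to infinity. Then infinitely many of the trajectories `x̂_k` stay in
one closed ball of radius `C`. On the product of that ball with `[t0, tf]`, which is compact, `f` is
bounded and Lipschitz in the state, so each such `x̂_k` is an approximate solution of the limiting
equation with error at most a constant times `‖P_k - P₀‖`. Grönwall's inequality
(`dist_le_of_approx_trajectories_ODE_of_mem`) makes these trajectories Cauchy at every time. By
dominated convergence their pointwise limit satisfies the integral form of the limiting problem,
hence solves that problem on all of `[t0, tf]`, contrary to assumption. This compactness statement
is `exists_solution_of_bounded`. The infinitely many good indices are encoded by the filter
`atTop ⊓ 𝓟 {k | x̂_k stays in the ball}` rather than by a subsequence.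
-/

open Matrix Filter

/-- The Grönwall bound is jointly continuous at `(δ, ε) = (0, 0)`, where it vanishes. -/
lemma tendsto_gronwallBound_zero {ι : Type*} {l : Filter ι} {δ ε : ι → ℝ} (K s : ℝ)
    (hδ : Tendsto δ l (nhds 0)) (hε : Tendsto ε l (nhds 0)) :
    Tendsto (fun i => gronwallBound (δ i) K (ε i) s) l (nhds 0) := by
  unfold gronwallBound
  split_ifs
  · simpa using hδ.add (hε.mul_const s)
  · simpa using (hδ.mul_const (Real.exp (K * s))).add
      ((hε.div_const K).mul_const (Real.exp (K * s) - 1))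

/-- If, along a nontrivial filter, the operators `L k` converge to `L₀` and the solutions `x k` of
`x' = L k (f x t)`, `x t0 = L k x0` all stay in a fixed ball, then the limiting problem for `L₀` has
a solution on the whole interval. -/
lemma exists_solution_of_bounded {E : Type*} [NormedAddCommGroup E] [NormedSpace ℝ E]
    [FiniteDimensional ℝ E] {l : Filter ℕ} [l.NeBot] [l.IsCountablyGenerated]
    {t0 tf C : ℝ} (ht : t0 < tf) {f : E → ℝ → E} {f' : E → ℝ → (E →L[ℝ] E)}
    (hf : ContinuousOn (fun p : E × ℝ => f p.1 p.2) (Set.univ ×ˢ Set.Icc t0 tf))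
    (hf' : ∀ t ∈ Set.Icc t0 tf, ∀ x, HasFDerivAt (fun y => f y t) (f' x t) x)
    (hf'c : ContinuousOn (fun p : E × ℝ => f' p.1 p.2) (Set.univ ×ˢ Set.Icc t0 tf))
    (x0 : E) {L : ℕ → E →L[ℝ] E} {L₀ : E →L[ℝ] E} (hL : Tendsto L l (nhds L₀))
    {x : ℕ → ℝ → E} (hx0 : ∀ k, x k t0 = L k x0)
    (hx : ∀ k, ∀ t ∈ Set.Icc t0 tf,
      HasDerivWithinAt (x k) (L k (f (x k t) t)) (Set.Icc t0 tf) t)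
    (hC : ∀ᶠ k in l, ∀ t ∈ Set.Icc t0 tf, ‖x k t‖ ≤ C) :
    ∃ y : ℝ → E, y t0 = L₀ x0 ∧ ∀ t ∈ Set.Icc t0 tf,
      HasDerivWithinAt y (L₀ (f (y t) t)) (Set.Icc t0 tf) t := by
  have : ProperSpace E := FiniteDimensional.proper ℝ E
  have : CompleteSpace E := FiniteDimensional.complete ℝ E
  have hsub : Metric.closedBall (0 : E) C ×ˢ Set.Icc t0 tf ⊆ Set.univ ×ˢ Set.Icc t0 tf :=
    Set.prod_mono (Set.subset_univ _) le_rfl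
  have hcomp : IsCompact (Metric.closedBall (0 : E) C ×ˢ Set.Icc t0 tf) :=
    (isCompact_closedBall _ _).prod isCompact_Icc
  obtain ⟨M, hM⟩ := hcomp.exists_bound_of_continuousOn (hf.mono hsub)
  obtain ⟨K, hK⟩ := hcomp.exists_bound_of_continuousOn (hf'c.mono hsub)
  have hM' : ∀ z ∈ Metric.closedBall (0 : E) C, ∀ t ∈ Set.Icc t0 tf, ‖f z t‖ ≤ M :=
    fun z hz t h => hM (z, t) ⟨hz, h⟩
  have hlip : ∀ t ∈ Set.Ico t0 tf, LipschitzOnWith (‖L₀‖₊ * K.toNNReal)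
      (fun z => L₀ (f z t)) (Metric.closedBall 0 C) := by
    intro t h
    have h' := Set.Ico_subset_Icc_self h
    refine L₀.lipschitz.comp_lipschitzOnWith ?_
    refine (convex_closedBall (0 : E) C).lipschitzOnWith_of_nnnorm_hasFDerivWithin_le
      (fun z _ => (hf' t h' z).hasFDerivWithinAt) fun z hz => ?_
    rw [← norm_toNNReal]
    exact Real.toNNReal_le_toNNReal (hK (z, t) ⟨hz, h'⟩)
  have hxc : ∀ k, ContinuousOn (x k) (Set.Icc t0 tf) :=
    fun k t h => (hx k t h).continuousWithinAt
  have hxr : ∀ k, ∀ t ∈ Set.Ico t0 tf,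
      HasDerivWithinAt (x k) (L k (f (x k t) t)) (Set.Ici t) t := fun k t h =>
    (hx k t (Set.Ico_subset_Icc_self h)).mono_of_mem_nhdsWithin (Icc_mem_nhdsGE_of_mem h)
  have hball : ∀ᶠ k in l, ∀ t ∈ Set.Icc t0 tf, x k t ∈ Metric.closedBall (0 : E) C := by
    simpa using hC
  have hnL : Tendsto (fun k => ‖L k - L₀‖) l (nhds 0) := by
    simpa using (hL.sub_const L₀).norm
  have happly : ∀ {u : ℕ → E} {z : E}, Tendsto u l (nhds z) →
      Tendsto (fun k => L k (u k)) l (nhds (L₀ z)) := fun hu =>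
    (isBoundedBilinearMap_apply.continuous.tendsto _).comp (hL.prodMk_nhds hu)
  have hcauchy : ∀ t ∈ Set.Icc t0 tf, Cauchy (map (fun k => x k t) l) := by
    intro t h
    rw [cauchy_map_iff, Metric.uniformity_eq_comap_nhds_zero, tendsto_comap_iff]
    refine ⟨‹_›, ?_⟩
    have hδ : Tendsto (fun p : ℕ × ℕ => dist (L p.1 x0) (L p.2 x0)) (l ×ˢ l) (nhds 0) := by
      have h1 : Tendsto (fun k => L k x0) l (nhds (L₀ x0)) := happly tendsto_const_nhds
      simpa using (h1.comp tendsto_fst).dist (h1.comp tendsto_snd)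
    have hε : Tendsto (fun p : ℕ × ℕ => ‖L p.1 - L₀‖ * M + ‖L p.2 - L₀‖ * M) (l ×ˢ l)
        (nhds 0) := by
      simpa using ((hnL.comp tendsto_fst).mul_const M).add ((hnL.comp tendsto_snd).mul_const M)
    refine squeeze_zero' (Eventually.of_forall fun _ => dist_nonneg) ?_
      (tendsto_gronwallBound_zero (‖L₀‖₊ * K.toNNReal : NNReal) (t - t0) hδ hε)
    have hb : ∀ k, (∀ t ∈ Set.Icc t0 tf, x k t ∈ Metric.closedBall (0 : E) C) →
        ∀ s ∈ Set.Ico t0 tf, dist (L k (f (x k s) s)) (L₀ (f (x k s) s)) ≤ ‖L k - L₀‖ * M := by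
      intro k hk s hs
      have hs' := Set.Ico_subset_Icc_self hs
      rw [dist_eq_norm, ← _root_.sub_apply]
      exact (L k - L₀).le_opNorm_of_le (hM' _ (hk s hs') s hs')
    filter_upwards [hball.prod_mk hball] with p hp
    exact dist_le_of_approx_trajectories_ODE_of_mem (v := fun s z => L₀ (f z s))
      (s := fun _ => Metric.closedBall 0 C) hlip
      (hxc p.1) (hxr p.1) (hb p.1 hp.1) (fun s hs => hp.1 s (Set.Ico_subset_Icc_self hs))
      (hxc p.2) (hxr p.2) (hb p.2 hp.2) (fun s hs => hp.2 s (Set.Ico_subset_Icc_self hs))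
      (by rw [hx0, hx0]) t h
  have hlim : ∀ t, ∃ z, t ∈ Set.Icc t0 tf → Tendsto (fun k => x k t) l (nhds z) := by
    intro t
    by_cases h : t ∈ Set.Icc t0 tf
    · obtain ⟨z, hz⟩ := CompleteSpace.complete (hcauchy t h)
      exact ⟨z, fun _ => hz⟩
    · exact ⟨0, fun h' => absurd h' h⟩
  choose y hy using hlim
  have hyball : ∀ t ∈ Set.Icc t0 tf, y t ∈ Metric.closedBall (0 : E) C := fun t h =>
    Metric.isClosed_closedBall.mem_of_tendsto (hy t h) (hball.mono fun k hk => hk t h)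
  have hbound : ∀ᶠ k in l, ∀ t ∈ Set.Icc t0 tf, ‖L k (f (x k t) t)‖ ≤ (‖L₀‖ + 1) * M := by
    filter_upwards [hball, hL.norm.eventually_le_const (lt_add_one ‖L₀‖)] with k hk hk' t h
    exact (L k).le_of_opNorm_le_of_le hk' (hM' _ (hk t h) t h)
  -- The limit inherits a common Lipschitz constant of the trajectories, hence is continuous.
  have hyc : ContinuousOn y (Set.Icc t0 tf) := by
    have : LipschitzOnWith ((‖L₀‖ + 1) * M).toNNReal y (Set.Icc t0 tf) := by
      refine LipschitzOnWith.of_dist_le_mul fun s hs t h => ?_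
      refine le_of_tendsto ((hy s hs).dist (hy t h)) ?_
      filter_upwards [hbound] with k hk
      refine ((convex_Icc t0 tf).lipschitzOnWith_of_nnnorm_hasDerivWithin_le (hx k)
        fun u hu => ?_).dist_le_mul s hs t h
      rw [← norm_toNNReal]
      exact Real.toNNReal_le_toNNReal (hk u hu)
    exact this.continuousOn
  have hcontf : ∀ (A : E →L[ℝ] E) (z : ℝ → E), ContinuousOn z (Set.Icc t0 tf) →
      ContinuousOn (fun s => A (f (z s) s)) (Set.Icc t0 tf) := fun A z hz =>
    A.continuous.comp_continuousOn
      (hf.comp (hz.prodMk continuousOn_id) fun s hs => ⟨Set.mem_univ _, hs⟩)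
  have hint : ∀ t ∈ Set.Icc t0 tf, y t = L₀ x0 + ∫ s in t0..t, L₀ (f (y s) s) := by
    intro t h
    have hst : Set.Icc t0 t ⊆ Set.Icc t0 tf := Set.Icc_subset_Icc_right h.2
    have hIoc : Set.uIoc t0 t ⊆ Set.Icc t0 tf := by
      rw [Set.uIoc_of_le h.1]
      exact Set.Ioc_subset_Icc_self.trans hst
    have hxk : ∀ k, x k t = L k x0 + ∫ s in t0..t, L k (f (x k s) s) := by
      intro k
      rw [intervalIntegral.integral_eq_sub_of_hasDeriv_right_of_le h.1 ((hxc k).mono hst)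
        (fun s hs => (hxr k s ⟨hs.1.le, hs.2.trans_le h.2⟩).mono Set.Ioi_subset_Ici_self)
        (((hcontf (L k) _ (hxc k)).mono hst).intervalIntegrable_of_Icc h.1), ← hx0 k]
      abel
    have h1 : Tendsto (fun k => ∫ s in t0..t, L k (f (x k s) s)) l
        (nhds (∫ s in t0..t, L₀ (f (y s) s))) := by
      refine intervalIntegral.tendsto_integral_filter_of_dominated_convergence
        (fun _ => (‖L₀‖ + 1) * M) ?_ ?_ intervalIntegrable_const ?_
      · exact Eventually.of_forall fun k =>
          ((hcontf (L k) _ (hxc k)).mono hIoc).aestronglyMeasurable measurableSet_uIoc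
      · filter_upwards [hbound] with k hk
        exact Eventually.of_forall fun s hs => hk s (hIoc hs)
      · refine Eventually.of_forall fun s hs => happly ?_
        have hs' := hIoc hs
        refine (hf (y s, s) ⟨Set.mem_univ _, hs'⟩).tendsto.comp
          (tendsto_nhdsWithin_iff.2 ⟨(hy s hs').prodMk_nhds tendsto_const_nhds, ?_⟩)
        exact Eventually.of_forall fun k => ⟨Set.mem_univ _, hs'⟩
    refine tendsto_nhds_unique (hy t h) ?_
    simp_rw [hxk]
    exact (happly tendsto_const_nhds).add h1
  refine ⟨y, by simpa using hint t0 (Set.left_mem_Icc.2 ht.le), fun t h => ?_⟩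
  have hunc : ContinuousOn (Function.uncurry fun (s : ℝ) (z : E) => L₀ (f z s))
      (Set.Icc t0 tf ×ˢ Set.univ) :=
    L₀.continuous.comp_continuousOn
      (hf.comp continuous_swap.continuousOn fun p hp => ⟨Set.mem_univ _, hp.1⟩)
  exact (ODE.hasDerivWithinAt_picard_Icc (Set.left_mem_Icc.2 ht.le) hunc hyc
    (fun _ _ => Set.mem_univ _) (L₀ x0) h).congr hint (hint t h)

/-- Blow-up of reduced-order trajectories: if projections `P_k → P₀`, each projected IVP
for `P_k` has a solution `x̂_k` on `[t0, tf]` but the one for `P₀` has no solution on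
`[t0, tf]`, then `max_{t ∈ [t0, tf]} ‖x̂_k(t)‖ → ∞`. -/
theorem stmt_12 (n : ℕ) (hn : 1 ≤ n) (t0 tf : ℝ) (ht : t0 < tf)
    (f : EuclideanSpace ℝ (Fin n) → ℝ → EuclideanSpace ℝ (Fin n))
    (f' : EuclideanSpace ℝ (Fin n) → ℝ →
      (EuclideanSpace ℝ (Fin n) →L[ℝ] EuclideanSpace ℝ (Fin n)))
    (hf : ContinuousOn (fun p : EuclideanSpace ℝ (Fin n) × ℝ => f p.1 p.2)
      (Set.univ ×ˢ Set.Icc t0 tf))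
    (hf' : ∀ t ∈ Set.Icc t0 tf, ∀ x, HasFDerivAt (fun y => f y t) (f' x t) x)
    (hf'c : ContinuousOn (fun p : EuclideanSpace ℝ (Fin n) × ℝ => f' p.1 p.2)
      (Set.univ ×ˢ Set.Icc t0 tf))
    (x0 : EuclideanSpace ℝ (Fin n))
    (P : ℕ → Matrix (Fin n) (Fin n) ℝ) (P₀ : Matrix (Fin n) (Fin n) ℝ)
    (hPlim : Tendsto P atTop (nhds P₀))
    (x : ℕ → ℝ → EuclideanSpace ℝ (Fin n))
    (hsol : ∀ k, x k t0 = Matrix.toEuclideanLin (P k) x0 ∧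
      ∀ t ∈ Set.Icc t0 tf,
        HasDerivWithinAt (x k) (Matrix.toEuclideanLin (P k) (f (x k t) t))
          (Set.Icc t0 tf) t)
    (hnosol : ¬ ∃ x₀ : ℝ → EuclideanSpace ℝ (Fin n),
      x₀ t0 = Matrix.toEuclideanLin P₀ x0 ∧
      ∀ t ∈ Set.Icc t0 tf,
        HasDerivWithinAt x₀ (Matrix.toEuclideanLin P₀ (f (x₀ t) t)) (Set.Icc t0 tf) t) :
    Tendsto (fun k => ⨆ t : Set.Icc t0 tf, ‖x k t‖) atTop atTop := by
  classical
  by_contra hnot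
  rw [tendsto_atTop] at hnot
  push Not at hnot
  obtain ⟨C, hC⟩ := hnot
  -- `T` sends a matrix to its operator; it is continuous because matrices form a
  -- finite-dimensional space.
  let T : Matrix (Fin n) (Fin n) ℝ →ₗ[ℝ]
      (EuclideanSpace ℝ (Fin n) →L[ℝ] EuclideanSpace ℝ (Fin n)) :=
    (LinearMap.toContinuousLinearMap.toLinearMap).comp Matrix.toEuclideanLin.toLinearMap
  have hT : Tendsto (fun k => T (P k)) atTop (nhds (T P₀)) :=
    (T.continuous_of_finiteDimensional.tendsto P₀).comp hPlim
  let S : Set ℕ := {k | ∀ t ∈ Set.Icc t0 tf, ‖x k t‖ ≤ C}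
  have hS : ∃ᶠ k in atTop, k ∈ S := by
    refine hC.mono fun k hk t h => ?_
    -- The supremum is a genuine one: the trajectory is continuous on a compact interval.
    have hbdd : BddAbove (Set.range fun t : Set.Icc t0 tf => ‖x k t‖) := by
      have hc : ContinuousOn (fun t => ‖x k t‖) (Set.Icc t0 tf) :=
        ContinuousOn.norm fun t h => ((hsol k).2 t h).continuousWithinAt
      have := isCompact_Icc.bddAbove_image hc
      rwa [Set.image_eq_range] at this
    exact (le_ciSup hbdd ⟨t, h⟩).trans (le_of_lt (by simpa using hk))
  have : (atTop ⊓ principal S).NeBot := frequently_mem_iff_neBot.1 hS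
  exact hnosol (exists_solution_of_bounded (l := atTop ⊓ principal S) (L := fun k => T (P k)) (L₀ := T P₀)
    ht hf hf' hf'c x0 (hT.mono_left inf_le_left) (fun k => (hsol k).1) (fun k => (hsol k).2)
    (mem_inf_of_right (mem_principal_self S)))
end

section
/- Let n ≥ 1, t_0 ≤ τ ≤ t_f, let B̄ be a closed ball in ℝⁿ, and let f : ℝⁿ × ℝ → ℝⁿ be continuous and satisfy ‖f(x,t)‖ ≤ M for all x ∈ B̄, t ∈ [t_0, t_f], and ‖f(x,t) − f(z,t)‖ ≤ L‖x − z‖ for all x, z ∈ B̄, t ∈ [t_0, t_f]. Let P_1, P_2 ∈ ℝ^{n×n}, x_0 ∈ ℝⁿ, and suppose x̂_1, x̂_2 : [t_0, τ] → B̄ are solutions of dx/dt = P_i f(x(t), t) with x̂_i(t_0) = P_i x_0 for i = 1, 2. Then for every t ∈ [t_0, τ]: ‖x̂_1(t) − x̂_2(t)‖ ≤ ‖P_1 − P_2‖_op ( ‖x_0‖ + M (t_f − t_0) ) e^{ L ‖P_2‖_op (t − t_0) }. -/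
/-!
The difference `x₁ - x₂` has derivative
`P₁ f(x₁, t) - P₂ f(x₂, t) = (P₁ - P₂) f(x₁, t) + P₂ (f(x₁, t) - f(x₂, t))`, whose norm is at most
`‖P₂‖ L ‖x₁ - x₂‖ + ‖P₁ - P₂‖ M`, and its initial value `(P₁ - P₂) x₀` has norm at most
`‖P₁ - P₂‖ ‖x₀‖`. Mathlib's Grönwall inequality bounds `‖x₁ - x₂‖` by the corresponding
`gronwallBound`, which `gronwallBound_le_mul_exp` puts in the form `(δ + ε s) exp (K s)`.
A negative `L` would force the two trajectories to coincide, so that case is trivial.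
-/

open Matrix

/-- For `K > 0` this amounts to `exp (K s) - 1 ≤ K s exp (K s)`, that is, `1 - K s ≤ exp (-K s)`. -/
lemma gronwallBound_le_mul_exp {δ K ε s : ℝ} (hK : 0 ≤ K) (hε : 0 ≤ ε) :
    gronwallBound δ K ε s ≤ (δ + ε * s) * Real.exp (K * s) := by
  rcases hK.eq_or_lt with rfl | hK
  · simp [gronwallBound_K0]
  · rw [gronwallBound_of_K_ne_0 hK.ne']
    have h1 : Real.exp (K * s) - 1 ≤ K * s * Real.exp (K * s) := by
      have h2 := mul_le_mul_of_nonneg_right (Real.add_one_le_exp (-(K * s)))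
        (Real.exp_pos (K * s)).le
      rw [← Real.exp_add, neg_add_cancel, Real.exp_zero] at h2
      linarith
    have h3 := mul_le_mul_of_nonneg_left h1 (div_nonneg hε hK.le)
    have h4 : ε / K * (K * s * Real.exp (K * s)) = ε * s * Real.exp (K * s) := by
      field_simp
    dsimp only
    linarith

/-- Grönwall-type estimate comparing solutions of the projected IVPs for two different
projections `P₁, P₂`, valid while both trajectories remain in a closed ball `B̄` on which
`f` is bounded by `M` and `L`-Lipschitz in the state:
`‖x̂₁(t) − x̂₂(t)‖ ≤ ‖P₁ − P₂‖_op (‖x₀‖ + M (t_f − t₀)) exp(L ‖P₂‖_op (t − t₀))`. -/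
theorem stmt_13 (n : ℕ) (hn : 1 ≤ n) (t0 τ tf : ℝ) (hτ : t0 ≤ τ) (hτf : τ ≤ tf)
    (c : EuclideanSpace ℝ (Fin n)) (R : ℝ)
    (f : EuclideanSpace ℝ (Fin n) → ℝ → EuclideanSpace ℝ (Fin n))
    (hcont : Continuous fun p : EuclideanSpace ℝ (Fin n) × ℝ => f p.1 p.2)
    (M L : ℝ)
    (hM : ∀ x ∈ Metric.closedBall c R, ∀ t ∈ Set.Icc t0 tf, ‖f x t‖ ≤ M)
    (hL : ∀ x ∈ Metric.closedBall c R, ∀ z ∈ Metric.closedBall c R,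
      ∀ t ∈ Set.Icc t0 tf, ‖f x t - f z t‖ ≤ L * ‖x - z‖)
    (P₁ P₂ : Matrix (Fin n) (Fin n) ℝ) (x0 : EuclideanSpace ℝ (Fin n))
    (x₁ x₂ : ℝ → EuclideanSpace ℝ (Fin n))
    (hmem₁ : ∀ t ∈ Set.Icc t0 τ, x₁ t ∈ Metric.closedBall c R)
    (hmem₂ : ∀ t ∈ Set.Icc t0 τ, x₂ t ∈ Metric.closedBall c R)
    (hic₁ : x₁ t0 = Matrix.toEuclideanLin P₁ x0)
    (hic₂ : x₂ t0 = Matrix.toEuclideanLin P₂ x0)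
    (hode₁ : ∀ t ∈ Set.Icc t0 τ,
      HasDerivWithinAt x₁ (Matrix.toEuclideanLin P₁ (f (x₁ t) t)) (Set.Icc t0 τ) t)
    (hode₂ : ∀ t ∈ Set.Icc t0 τ,
      HasDerivWithinAt x₂ (Matrix.toEuclideanLin P₂ (f (x₂ t) t)) (Set.Icc t0 τ) t) :
    ∀ t ∈ Set.Icc t0 τ,
      ‖x₁ t - x₂ t‖ ≤
        ‖Matrix.toEuclideanCLM (𝕜 := ℝ) P₁ - Matrix.toEuclideanCLM (𝕜 := ℝ) P₂‖ *
          (‖x0‖ + M * (tf - t0)) *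
          Real.exp (L * ‖Matrix.toEuclideanCLM (𝕜 := ℝ) P₂‖ * (t - t0)) := by
  have ht0 : t0 ∈ Set.Icc t0 τ := ⟨le_rfl, hτ⟩
  have hsub : ∀ t ∈ Set.Icc t0 τ, t ∈ Set.Icc t0 tf := fun t ht => ⟨ht.1, ht.2.trans hτf⟩
  have hM0 : 0 ≤ M := (norm_nonneg _).trans (hM _ (hmem₁ t0 ht0) t0 (hsub t0 ht0))
  have hlen : 0 ≤ tf - t0 := by linarith
  intro t ht
  rcases lt_or_ge L 0 with hLneg | hL0
  · have h1 := (norm_nonneg _).trans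
      (hL _ (hmem₁ t ht) _ (hmem₂ t ht) t (hsub t ht))
    have h2 : ‖x₁ t - x₂ t‖ ≤ 0 := by
      by_contra! h
      exact absurd h1 (mul_neg_of_neg_of_pos hLneg h).not_ge
    exact h2.trans (by positivity)
  -- The linear maps in the ODEs and the continuous ones in the bound agree definitionally.
  set A₁ := Matrix.toEuclideanCLM (𝕜 := ℝ) P₁ with hA₁
  set A₂ := Matrix.toEuclideanCLM (𝕜 := ℝ) P₂ with hA₂
  have e₁ : ∀ v, Matrix.toEuclideanLin P₁ v = A₁ v := fun _ => rfl
  have e₂ : ∀ v, Matrix.toEuclideanLin P₂ v = A₂ v := fun _ => rfl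
  simp only [e₁] at hic₁ hode₁
  simp only [e₂] at hic₂ hode₂
  have hderiv : ∀ s ∈ Set.Icc t0 τ, HasDerivWithinAt (fun u => x₁ u - x₂ u)
      (A₁ (f (x₁ s) s) - A₂ (f (x₂ s) s)) (Set.Icc t0 τ) s :=
    fun s hs => (hode₁ s hs).sub (hode₂ s hs)
  have hgr := norm_le_gronwallBound_of_norm_deriv_right_le
    (f := fun u => x₁ u - x₂ u) (f' := fun s => A₁ (f (x₁ s) s) - A₂ (f (x₂ s) s))
    (δ := ‖A₁ - A₂‖ * ‖x0‖) (K := L * ‖A₂‖) (ε := ‖A₁ - A₂‖ * M) (a := t0) (b := τ)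
    (fun s hs => (hderiv s hs).continuousWithinAt)
    (fun s hs => (hderiv s (Set.Ico_subset_Icc_self hs)).mono_of_mem_nhdsWithin
      (Icc_mem_nhdsGE_of_mem hs))
    (by
      rw [hic₁, hic₂, ← _root_.sub_apply]
      exact (A₁ - A₂).le_opNorm x0)
    (by
      intro s hs
      have hs := Set.Ico_subset_Icc_self hs
      have hsplit : A₁ (f (x₁ s) s) - A₂ (f (x₂ s) s)
          = A₂ (f (x₁ s) s - f (x₂ s) s) + (A₁ - A₂) (f (x₁ s) s) := by
        rw [map_sub, _root_.sub_apply]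
        abel
      rw [hsplit]
      refine (norm_add_le _ _).trans (add_le_add ?_ ?_)
      · calc ‖A₂ (f (x₁ s) s - f (x₂ s) s)‖
            ≤ ‖A₂‖ * (L * ‖x₁ s - x₂ s‖) := A₂.le_opNorm_of_le
              (hL _ (hmem₁ s hs) _ (hmem₂ s hs) s (hsub s hs))
          _ = L * ‖A₂‖ * ‖x₁ s - x₂ s‖ := by ring
      · exact (A₁ - A₂).le_opNorm_of_le (hM _ (hmem₁ s hs) s (hsub s hs)))
    t ht
  refine (hgr.trans (gronwallBound_le_mul_exp (by positivity) (by positivity))).trans ?_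
  rw [mul_assoc ‖A₁ - A₂‖ M, ← mul_add]
  have htf : t ≤ tf := (hsub t ht).2
  gcongr
end

section
/- Let t_0 < t_f, and let r, m, p ≥ 1. Let f̃ : ℝ^r × ℝ × ℝ^p → ℝ^r and g̃ : ℝ^r × ℝ^p → ℝ^m be C¹, let L_y : ℝ^m → ℝ be C¹, and let y : [t_0, t_f] → ℝ^m be continuous. Suppose z : [t_0, t_f] × ℝ^p → ℝ^r is C¹ (jointly in (t, θ)) and satisfies ∂z/∂t (t, θ) = f̃(z(t,θ), t, θ) for all t ∈ [t_0, t_f] and θ ∈ ℝ^p. Define ŷ(t; θ) = g̃(z(t,θ), θ) and J(θ) = ∫_{t_0}^{t_f} L_y( ŷ(t;θ) − y(t) ) dt. Fix θ ∈ ℝ^p and set F(t) = ∂f̃/∂z (z(t,θ), t, θ) ∈ ℝ^{r×r}, S(t) = ∂f̃/∂θ (z(t,θ), t, θ) ∈ ℝ^{r×p}, H(t) = ∂g̃/∂z (z(t,θ), θ) ∈ ℝ^{m×r}, T(t) = ∂g̃/∂θ (z(t,θ), θ) ∈ ℝ^{m×p}, and g(t) = ∇L_y( ŷ(t;θ) −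 y(t) ) ∈ ℝ^m. Let λ : [t_0, t_f] → ℝ^r be the solution of the linear (adjoint) ODE −λ'(t) = F(t)ᵀ λ(t) + H(t)ᵀ g(t) with λ(t_f) = 0. Then J is differentiable at θ and its gradient with respect to the Euclidean inner product on ℝ^p is ∇J(θ) = ( ∂z/∂θ (t_0, θ) )ᵀ λ(t_0) + ∫_{t_0}^{t_f} [ S(t)ᵀ λ(t) + T(t)ᵀ g(t) ] dt. -/
/-! The proof pairs the adjoint state with the sensitivity `ψ(t) = ∂z/∂θ (t, θ) v` in a fixed
direction `v`.

* Differentiating `z(t, ϑ) = z(t₀, ϑ) + ∫_{t₀}^t f̃(z(s, ϑ), s, ϑ) ds` under the integral sign gives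
  the variational equation `ψ' = F ψ + S v`, even though `z` is only `C¹`
  (`hasDerivAt_sensitivity`).
* Differentiating `J` under the integral sign gives `J'(θ) v = ∫ g ⬝ (H ψ + T v)`.
* By the adjoint equation, `(λ ⬝ ψ)' = -g ⬝ H ψ + λ ⬝ S v`. Integrating over `[t₀, t_f]` and using
  `λ(t_f) = 0` yields `∫ g ⬝ H ψ = λ(t₀) ⬝ ψ(t₀) + ∫ λ ⬝ S v`, which is the formula.

All Jacobians are handled as partial applications of total derivatives such as
`fderiv ℝ f̃ (z, t, θ) (a, 0, b)`, whose continuity in `t` is immediate. Since the data `y` is only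
continuous on `[t₀, t_f]`, it is first replaced by its constant extension to `ℝ`, so that the
integrands are continuous everywhere (`adjoint_formula_of_continuous`). -/

open Matrix intervalIntegral

/-- The Jacobian matrix (of partial derivatives) of a map `f : ℝᵃ → ℝᵇ` at `x`. -/
noncomputable def jacobianMat {a b : ℕ} (f : (Fin a → ℝ) → (Fin b → ℝ))
    (x : Fin a → ℝ) : Matrix (Fin b) (Fin a) ℝ :=
  Matrix.of fun i j => fderiv ℝ f x (Pi.single j 1) i

/-- The Euclidean gradient of a scalar function `L : ℝᵐ → ℝ` at `v`. -/
noncomputable def gradVec {m : ℕ} (L : (Fin m → ℝ) → ℝ) (v : Fin m → ℝ) : Fin m → ℝ :=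
  fun i => fderiv ℝ L v (Pi.single i 1)

open Set MeasureTheory

/-- Differentiation under the integral sign over a compact interval, for an integrand with jointly
continuous derivative in the parameter. -/
theorem hasFDerivAt_integral_of_continuous {E F : Type*} [NormedAddCommGroup E] [NormedSpace ℝ E]
    [ProperSpace E] [NormedAddCommGroup F] [NormedSpace ℝ F]
    {G : E → ℝ → F} {G' : E → ℝ → E →L[ℝ] F}
    (hG : ∀ x, Continuous (G x)) (hG' : Continuous fun q : E × ℝ => G' q.1 q.2)
    (hd : ∀ x t, HasFDerivAt (fun x => G x t) (G' x t) x) (a b : ℝ) (x₀ : E) :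
    HasFDerivAt (fun x => ∫ t in a..b, G x t) (∫ t in a..b, G' x₀ t) x₀ := by
  obtain ⟨C, hC⟩ := ((isCompact_closedBall x₀ 1).prod (isCompact_uIcc (a := a) (b := b))
    ).exists_bound_of_continuousOn hG'.continuousOn
  have hG'x : Continuous (G' x₀) := hG'.comp (by fun_prop : Continuous fun t : ℝ => (x₀, t))
  exact intervalIntegral.hasFDerivAt_integral_of_dominated_of_fderiv_le (F' := G') (bound := fun _ => C)
    (Metric.closedBall_mem_nhds x₀ one_pos)
    (Filter.Eventually.of_forall fun x => (hG x).aestronglyMeasurable)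
    ((hG x₀).intervalIntegrable _ _) hG'x.aestronglyMeasurable
    (Filter.Eventually.of_forall fun t ht x hx => hC (x, t) ⟨hx, uIoc_subset_uIcc ht⟩)
    intervalIntegrable_const (Filter.Eventually.of_forall fun t _ x _ => hd x t)

theorem jacobianMat_mulVec {a b : ℕ} (f : (Fin a → ℝ) → (Fin b → ℝ)) (x v : Fin a → ℝ) :
    (jacobianMat f x).mulVec v = fderiv ℝ f x v := by
  ext i
  conv_rhs => rw [← Finset.univ_sum_single v]
  rw [map_sum, Finset.sum_apply, Matrix.mulVec_apply, dotProduct]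
  refine Finset.sum_congr rfl fun j _ => ?_
  have h : Pi.single j (v j) = v j • (Pi.single j 1 : Fin a → ℝ) := by
    rw [← Pi.single_smul]; simp
  rw [h, map_smul]
  simp [jacobianMat, mul_comm]

theorem gradVec_dotProduct {m : ℕ} (L : (Fin m → ℝ) → ℝ) (x v : Fin m → ℝ) :
    gradVec L x ⬝ᵥ v = fderiv ℝ L x v := by
  conv_rhs => rw [← Finset.univ_sum_single v]
  rw [map_sum]
  refine Finset.sum_congr rfl fun j _ => ?_
  have h : Pi.single j (v j) = v j • (Pi.single j 1 : Fin m → ℝ) := by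
    rw [← Pi.single_smul]; simp
  rw [h, map_smul]
  simp [gradVec, mul_comm]

theorem transpose_mulVec_dotProduct {a b : ℕ} (A : Matrix (Fin b) (Fin a) ℝ) (u : Fin b → ℝ)
    (v : Fin a → ℝ) : Aᵀ.mulVec u ⬝ᵥ v = u ⬝ᵥ A.mulVec v := by
  rw [Matrix.mulVec_transpose, Matrix.dotProduct_mulVec]

/-- The variational equation: the directional sensitivity `ψ(t) = ∂z/∂θ (t, θ) v` of a `C¹` flow
satisfies `ψ' = F ψ + S v`. No second derivatives of `z` are needed, because the equation is first
obtained in integral form. -/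
theorem hasDerivAt_sensitivity {r p : ℕ} {t0 tf : ℝ}
    {ftil : (Fin r → ℝ) → ℝ → (Fin p → ℝ) → (Fin r → ℝ)}
    (hftil : ContDiff ℝ 1
      (fun q : (Fin r → ℝ) × ℝ × (Fin p → ℝ) => ftil q.1 q.2.1 q.2.2))
    {z : ℝ → (Fin p → ℝ) → (Fin r → ℝ)}
    (hz : ContDiff ℝ 1 (fun q : ℝ × (Fin p → ℝ) => z q.1 q.2))
    (hzode : ∀ t ∈ Set.Icc t0 tf, ∀ ϑ : Fin p → ℝ,
      HasDerivAt (fun s => z s ϑ) (ftil (z t ϑ) t ϑ) t)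
    (Dz : ℝ → (Fin p → ℝ) → (Fin p → ℝ) →L[ℝ] (Fin r → ℝ))
    (hDzc : Continuous fun q : ℝ × (Fin p → ℝ) => Dz q.1 q.2)
    (hDz : ∀ t ϑ, HasFDerivAt (z t) (Dz t ϑ) ϑ)
    (θ v : Fin p → ℝ) {t : ℝ} (htI : t ∈ Ioo t0 tf) :
    HasDerivAt (fun s => Dz s θ v)
      (fderiv ℝ (fun q : (Fin r → ℝ) × ℝ × (Fin p → ℝ) => ftil q.1 q.2.1 q.2.2) (z t θ, t, θ)
        (Dz t θ v, 0, v)) t := by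
  set FT := fun q : (Fin r → ℝ) × ℝ × (Fin p → ℝ) => ftil q.1 q.2.1 q.2.2 with hFT
  have hzc : Continuous fun q : ℝ × (Fin p → ℝ) => z q.1 q.2 := hz.continuous
  have hdF : Continuous (fderiv ℝ FT) := hftil.continuous_fderiv one_ne_zero
  let G' : (Fin p → ℝ) → ℝ → (Fin p → ℝ) →L[ℝ] (Fin r → ℝ) := fun ϑ s =>
    (fderiv ℝ FT (z s ϑ, s, ϑ)).comp
      ((Dz s ϑ).prod ((0 : (Fin p → ℝ) →L[ℝ] ℝ).prod (ContinuousLinearMap.id ℝ _)))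
  have hzsw : Continuous fun q : (Fin p → ℝ) × ℝ => z q.2 q.1 := hzc.comp continuous_swap
  have hDsw : Continuous fun q : (Fin p → ℝ) × ℝ => Dz q.2 q.1 := hDzc.comp continuous_swap
  have hG'c : Continuous fun q : (Fin p → ℝ) × ℝ => G' q.1 q.2 := by
    refine Continuous.clm_comp (hdF.comp (by fun_prop)) ?_
    exact ((ContinuousLinearMap.prodₗᵢ ℝ).continuous.comp (hDsw.prodMk continuous_const))
  have hGc : ∀ ϑ, Continuous fun s => FT (z s ϑ, s, ϑ) := fun ϑ =>
    hftil.continuous.comp ((hzc.comp (by fun_prop : Continuous fun s : ℝ => (s, ϑ))).prodMk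
      (by fun_prop))
  have hGd : ∀ ϑ s, HasFDerivAt (fun ϑ => FT (z s ϑ, s, ϑ)) (G' ϑ s) ϑ := fun ϑ s =>
    ((hftil.differentiable one_ne_zero) _).hasFDerivAt.comp ϑ
      ((hDz s ϑ).prodMk ((hasFDerivAt_const s ϑ).prodMk (hasFDerivAt_id ϑ)))
  have hG'θ : Continuous (G' θ) := hG'c.comp (by fun_prop : Continuous fun s : ℝ => (θ, s))
  have hG'v : Continuous fun s => G' θ s v := hG'θ.clm_apply continuous_const
  -- the integral form of the variational equation, valid on `[t₀, t_f]`
  have hint : ∀ s ∈ Icc t0 tf, Dz s θ v = Dz t0 θ v + ∫ τ in t0..s, G' θ τ v := by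
    intro s hs
    have hzs : z s = fun ϑ => z t0 ϑ + ∫ τ in t0..s, FT (z τ ϑ, τ, ϑ) := by
      funext ϑ
      rw [integral_eq_sub_of_hasDerivAt (f := fun s => z s ϑ)]
      · abel
      · intro τ hτ
        rw [uIcc_of_le hs.1] at hτ
        exact hzode τ ⟨hτ.1, hτ.2.trans hs.2⟩ ϑ
      · exact (hGc ϑ).intervalIntegrable _ _
    have h1 := (hDz t0 θ).add (hasFDerivAt_integral_of_continuous hGc hG'c hGd t0 s θ)
    have h2 := hDz s θ
    rw [hzs] at h2
    rw [h2.unique h1, _root_.add_apply,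
      ContinuousLinearMap.intervalIntegral_apply (hG'θ.intervalIntegrable _ _)]
  have hmain : HasDerivAt (fun s => Dz t0 θ v + ∫ τ in t0..s, G' θ τ v) (G' θ t v) t :=
    ((hG'v.integral_hasStrictDerivAt t0 t).hasDerivAt).const_add _
  refine hmain.congr_of_eventuallyEq ?_
  filter_upwards [Icc_mem_nhds htI.1 htI.2] with s hs using hint s hs

/-- The adjoint gradient formula, tested against a direction `v`, when the data `y` is continuous
on all of `ℝ`. -/
theorem adjoint_formula_of_continuous (r m p : ℕ) (t0 tf : ℝ) (ht : t0 < tf)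
    (ftil : (Fin r → ℝ) → ℝ → (Fin p → ℝ) → (Fin r → ℝ))
    (gtil : (Fin r → ℝ) → (Fin p → ℝ) → (Fin m → ℝ))
    (Ly : (Fin m → ℝ) → ℝ) (y : ℝ → (Fin m → ℝ))
    (hftil : ContDiff ℝ 1
      (fun q : (Fin r → ℝ) × ℝ × (Fin p → ℝ) => ftil q.1 q.2.1 q.2.2))
    (hgtil : ContDiff ℝ 1 (fun q : (Fin r → ℝ) × (Fin p → ℝ) => gtil q.1 q.2))
    (hLy : ContDiff ℝ 1 Ly)
    (hy : Continuous y)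
    (z : ℝ → (Fin p → ℝ) → (Fin r → ℝ))
    (hz : ContDiff ℝ 1 (fun q : ℝ × (Fin p → ℝ) => z q.1 q.2))
    (hzode : ∀ t ∈ Set.Icc t0 tf, ∀ ϑ : Fin p → ℝ,
      HasDerivAt (fun s => z s ϑ) (ftil (z t ϑ) t ϑ) t)
    (θ : Fin p → ℝ)
    (lam : ℝ → (Fin r → ℝ))
    (hlamtf : lam tf = 0)
    (hlam : ∀ t ∈ Set.Icc t0 tf,
      HasDerivWithinAt lam
        (-((jacobianMat (fun w => ftil w t θ) (z t θ))ᵀ.mulVec (lam t) +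
            (jacobianMat (fun w => gtil w θ) (z t θ))ᵀ.mulVec
              (gradVec Ly (gtil (z t θ) θ - y t))))
        (Set.Icc t0 tf) t) :
    DifferentiableAt ℝ
      (fun ϑ : Fin p → ℝ => ∫ t in t0..tf, Ly (gtil (z t ϑ) ϑ - y t)) θ ∧
    ∀ v : Fin p → ℝ,
      fderiv ℝ (fun ϑ : Fin p → ℝ => ∫ t in t0..tf, Ly (gtil (z t ϑ) ϑ - y t)) θ v =
        ((jacobianMat (fun ϑ => z t0 ϑ) θ)ᵀ.mulVec (lam t0) +
          ∫ t in t0..tf,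
            ((jacobianMat (fun ϑ => ftil (z t θ) t ϑ) θ)ᵀ.mulVec (lam t) +
              (jacobianMat (fun ϑ => gtil (z t θ) ϑ) θ)ᵀ.mulVec
                (gradVec Ly (gtil (z t θ) θ - y t)))) ⬝ᵥ v := by
  set FT := fun q : (Fin r → ℝ) × ℝ × (Fin p → ℝ) => ftil q.1 q.2.1 q.2.2 with hFT
  set GT := fun q : (Fin r → ℝ) × (Fin p → ℝ) => gtil q.1 q.2 with hGT
  have hdF : Continuous (fderiv ℝ FT) := hftil.continuous_fderiv one_ne_zero
  have hdG : Continuous (fderiv ℝ GT) := hgtil.continuous_fderiv one_ne_zero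
  have hdL : Continuous (fderiv ℝ Ly) := hLy.continuous_fderiv one_ne_zero
  have hFd : ∀ q, HasFDerivAt FT (fderiv ℝ FT q) q := fun q =>
    (hftil.differentiable one_ne_zero q).hasFDerivAt
  have hGd : ∀ q, HasFDerivAt GT (fderiv ℝ GT q) q := fun q =>
    (hgtil.differentiable one_ne_zero q).hasFDerivAt
  have hLd : ∀ q, HasFDerivAt Ly (fderiv ℝ Ly q) q := fun q =>
    (hLy.differentiable one_ne_zero q).hasFDerivAt
  have hzc : Continuous fun q : ℝ × (Fin p → ℝ) => z q.1 q.2 := hz.continuous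
  let Dz : ℝ → (Fin p → ℝ) → (Fin p → ℝ) →L[ℝ] (Fin r → ℝ) := fun t ϑ =>
    (fderiv ℝ (fun q : ℝ × (Fin p → ℝ) => z q.1 q.2) (t, ϑ)).comp
      (ContinuousLinearMap.inr ℝ ℝ (Fin p → ℝ))
  have hDzc : Continuous fun q : ℝ × (Fin p → ℝ) => Dz q.1 q.2 :=
    (hz.continuous_fderiv one_ne_zero).clm_comp continuous_const
  have hDz : ∀ t ϑ, HasFDerivAt (z t) (Dz t ϑ) ϑ := fun t ϑ =>
    (hz.differentiable one_ne_zero (t, ϑ)).hasFDerivAt.comp ϑ (hasFDerivAt_prodMk_right t ϑ)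
  have hzsw : Continuous fun q : (Fin p → ℝ) × ℝ => z q.2 q.1 := hzc.comp continuous_swap
  have hDsw : Continuous fun q : (Fin p → ℝ) × ℝ => Dz q.2 q.1 := hDzc.comp continuous_swap
  have hzθ : Continuous fun t => z t θ := hzc.comp (by fun_prop : Continuous fun s : ℝ => (s, θ))
  have hDθ : Continuous fun t => Dz t θ := hDzc.comp (by fun_prop : Continuous fun s : ℝ => (s, θ))
  -- the total derivatives along the reference trajectory, and their continuity in time
  let dF : ℝ → _ := fun t => fderiv ℝ FT (z t θ, t, θ)
  let dG : ℝ → _ := fun t => fderiv ℝ GT (z t θ, θ)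
  let dL : ℝ → _ := fun t => fderiv ℝ Ly (gtil (z t θ) θ - y t)
  have cF : Continuous dF := hdF.comp (by fun_prop)
  have cG : Continuous dG := hdG.comp (by fun_prop)
  have cL : Continuous dL := hdL.comp
    ((hgtil.continuous.comp (by fun_prop : Continuous fun t => (z t θ, θ))).sub hy)
  -- the Jacobian matrices as partial applications of the total derivatives
  have eF : ∀ t a, (jacobianMat (fun w => ftil w t θ) (z t θ)).mulVec a = dF t (a, 0, 0) := by
    intro t a
    rw [jacobianMat_mulVec]
    have h := (hFd (z t θ, t, θ)).comp (z t θ)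
      (hasFDerivAt_prodMk_left (𝕜 := ℝ) (z t θ) (t, θ))
    exact congrArg (fun A => A a) h.fderiv
  have eS : ∀ t b, (jacobianMat (fun ϑ => ftil (z t θ) t ϑ) θ).mulVec b = dF t (0, 0, b) := by
    intro t b
    rw [jacobianMat_mulVec]
    have h := (hFd (z t θ, t, θ)).comp θ
      ((hasFDerivAt_const (z t θ) θ).prodMk (hasFDerivAt_prodMk_right (𝕜 := ℝ) t θ))
    exact congrArg (fun A => A b) h.fderiv
  have eH : ∀ t a, (jacobianMat (fun w => gtil w θ) (z t θ)).mulVec a = dG t (a, 0) := by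
    intro t a
    rw [jacobianMat_mulVec]
    have h := (hGd (z t θ, θ)).comp (z t θ) (hasFDerivAt_prodMk_left (𝕜 := ℝ) (z t θ) θ)
    exact congrArg (fun A => A a) h.fderiv
  have eT : ∀ t b, (jacobianMat (fun ϑ => gtil (z t θ) ϑ) θ).mulVec b = dG t (0, b) := by
    intro t b
    rw [jacobianMat_mulVec]
    have h := (hGd (z t θ, θ)).comp θ (hasFDerivAt_prodMk_right (𝕜 := ℝ) (z t θ) θ)
    exact congrArg (fun A => A b) h.fderiv
  -- differentiation of `J` under the integral sign
  let G' : (Fin p → ℝ) → ℝ → (Fin p → ℝ) →L[ℝ] ℝ := fun ϑ t =>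
    (fderiv ℝ Ly (gtil (z t ϑ) ϑ - y t)).comp ((fderiv ℝ GT (z t ϑ, ϑ)).comp
      ((Dz t ϑ).prod (ContinuousLinearMap.id ℝ _)))
  have hgc : Continuous fun q : (Fin p → ℝ) × ℝ => gtil (z q.2 q.1) q.1 - y q.2 :=
    (hgtil.continuous.comp (hzsw.prodMk continuous_fst)).sub (hy.comp continuous_snd)
  have hG'c : Continuous fun q : (Fin p → ℝ) × ℝ => G' q.1 q.2 := by
    refine (hdL.comp hgc).clm_comp ((hdG.comp (by fun_prop)).clm_comp ?_)
    exact (ContinuousLinearMap.prodₗᵢ ℝ).continuous.comp (hDsw.prodMk continuous_const)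
  have hG'θ : Continuous (G' θ) := hG'c.comp (by fun_prop : Continuous fun s : ℝ => (θ, s))
  have hJ : HasFDerivAt (fun ϑ : Fin p → ℝ => ∫ t in t0..tf, Ly (gtil (z t ϑ) ϑ - y t))
      (∫ t in t0..tf, G' θ t) θ := by
    refine hasFDerivAt_integral_of_continuous (fun ϑ => ?_) hG'c (fun ϑ t => ?_) t0 tf θ
    · exact hLy.continuous.comp (hgc.comp (by fun_prop : Continuous fun s : ℝ => (ϑ, s)))
    · have h : HasFDerivAt (fun ϑ => (z t ϑ, ϑ)) _ ϑ := (hDz t ϑ).prodMk (hasFDerivAt_id ϑ)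
      have h' := HasFDerivAt.comp (f := fun ϑ => (z t ϑ, ϑ)) ϑ (hGd (z t ϑ, ϑ)) h
      exact (hLd (gtil (z t ϑ) ϑ - y t)).comp ϑ (h'.sub_const (y t))
  refine ⟨hJ.differentiableAt, fun v => ?_⟩
  rw [hJ.fderiv, ContinuousLinearMap.intervalIntegral_apply (hG'θ.intervalIntegrable _ _)]
  have clam : ContinuousOn lam (Icc t0 tf) := fun t h => (hlam t h).continuousWithinAt
  have cdot : ∀ w : ℝ → Fin r → ℝ, Continuous w →
      ContinuousOn (fun t => lam t ⬝ᵥ w t) (Icc t0 tf) := fun w hw => by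
    simp only [dotProduct]
    exact continuousOn_finsetSum _ fun i _ =>
      ((continuous_apply i).comp_continuousOn clam).mul
        ((continuous_apply i).comp hw).continuousOn
  -- the integrand of the gradient formula, paired with a direction
  let K : ℝ → Fin p → ℝ := fun t =>
    (jacobianMat (fun ϑ => ftil (z t θ) t ϑ) θ)ᵀ.mulVec (lam t) +
      (jacobianMat (fun ϑ => gtil (z t θ) ϑ) θ)ᵀ.mulVec (gradVec Ly (gtil (z t θ) θ - y t))
  have hK : ∀ t b, K t ⬝ᵥ b = lam t ⬝ᵥ dF t (0, 0, b) + dL t (dG t (0, b)) := by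
    intro t b
    simp only [K, add_dotProduct, transpose_mulVec_dotProduct, eS, eT, gradVec_dotProduct, dL]
  have cS : ∀ b, Continuous fun t => dF t (0, 0, b) := fun b => cF.clm_apply continuous_const
  have cT : ∀ b, Continuous fun t => dL t (dG t (0, b)) := fun b =>
    cL.clm_apply (cG.clm_apply continuous_const)
  have cKb : ∀ b, ContinuousOn (fun t => K t ⬝ᵥ b) (Icc t0 tf) := fun b => by
    simp only [hK]
    exact (cdot _ (cS b)).add (cT b).continuousOn
  have cK : ContinuousOn K (Icc t0 tf) := by
    refine continuousOn_pi.2 fun j => ?_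
    simpa using cKb (Pi.single j 1)
  have iK : IntervalIntegrable K volume t0 tf := cK.intervalIntegrable_of_Icc ht.le
  have hKint : (∫ t in t0..tf, K t) ⬝ᵥ v = ∫ t in t0..tf, K t ⬝ᵥ v := by
    let ℓ : (Fin p → ℝ) →L[ℝ] ℝ := LinearMap.toContinuousLinearMap
      { toFun := fun u => u ⬝ᵥ v
        map_add' := fun a b => add_dotProduct a b v
        map_smul' := fun c a => smul_dotProduct c a v }
    exact (ℓ.intervalIntegral_comp_comm iK).symm
  -- the derivative of the pairing `λ ⬝ ψ`
  let ψ : ℝ → Fin r → ℝ := fun t => Dz t θ v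
  have cψ : Continuous ψ := hDθ.clm_apply continuous_const
  let W' : ℝ → ℝ := fun t => K t ⬝ᵥ v - G' θ t v
  have hG'v : ∀ t, G' θ t v = dL t (dG t (ψ t, v)) := fun t => rfl
  have iG : IntervalIntegrable (fun t => G' θ t v) volume t0 tf :=
    (hG'θ.clm_apply continuous_const).intervalIntegrable _ _
  have iKv : IntervalIntegrable (fun t => K t ⬝ᵥ v) volume t0 tf :=
    (cKb v).intervalIntegrable_of_Icc ht.le
  have hW : ∀ t ∈ Ioo t0 tf, HasDerivAt (fun s => lam s ⬝ᵥ ψ s) (W' t) t := by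
    intro t htI
    have h1 := (hlam t (Ioo_subset_Icc_self htI)).hasDerivAt (Icc_mem_nhds htI.1 htI.2)
    have h2 : HasDerivAt ψ (dF t (ψ t, 0, v)) t :=
      hasDerivAt_sensitivity hftil hz hzode Dz hDzc hDz θ v htI
    have h3 := HasDerivAt.fun_sum (u := Finset.univ) fun i _ =>
      (hasDerivAt_pi.1 h1 i).mul (hasDerivAt_pi.1 h2 i)
    refine h3.congr_deriv ?_
    rw [Finset.sum_add_distrib]
    change -(_ + _) ⬝ᵥ ψ t + lam t ⬝ᵥ dF t (ψ t, 0, v) = W' t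
    have s1 : dF t (ψ t, 0, v) = dF t (ψ t, 0, 0) + dF t (0, 0, v) := by
      rw [← map_add]; simp
    have s2 : dG t (ψ t, v) = dG t (ψ t, 0) + dG t (0, v) := by
      rw [← map_add]; simp
    rw [neg_dotProduct, add_dotProduct, transpose_mulVec_dotProduct, transpose_mulVec_dotProduct,
      eF, eH, gradVec_dotProduct]
    simp only [W', hK, hG'v, s1, s2, map_add, dotProduct_add]
    change -(_ + dL t _) + _ = _
    ring
  have hFTC : ∫ t in t0..tf, W' t = lam tf ⬝ᵥ ψ tf - lam t0 ⬝ᵥ ψ t0 :=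
    integral_eq_sub_of_hasDerivAt_of_le ht.le (cdot ψ cψ) hW (iKv.sub iG)
  have h0 : (jacobianMat (fun ϑ => z t0 ϑ) θ).mulVec v = ψ t0 := by
    rw [jacobianMat_mulVec]
    exact congrArg (fun A => A v) (hDz t0 θ).fderiv
  rw [intervalIntegral.integral_sub iKv iG, hlamtf, zero_dotProduct] at hFTC
  rw [add_dotProduct, transpose_mulVec_dotProduct, h0, hKint]
  linarith

/-- Adjoint-sensitivity formula for the gradient of the integrated model-error objective
`J(θ) = ∫_{t₀}^{t_f} L_y(ŷ(t;θ) − y(t)) dt`, where `ŷ(t;θ) = g̃(z(t,θ),θ)` and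
`∂z/∂t = f̃(z,t,θ)`: with `λ` solving the adjoint ODE
`−λ' = F(t)ᵀλ + H(t)ᵀ∇L_y(ŷ−y)`, `λ(t_f) = 0`, the objective is differentiable at `θ` and
`∇J(θ) = (∂z/∂θ(t₀,θ))ᵀ λ(t₀) + ∫ (S(t)ᵀλ(t) + T(t)ᵀ∇L_y(ŷ−y)) dt`. -/
theorem stmt_17 (r m p : ℕ) (hr : 1 ≤ r) (hm : 1 ≤ m) (hp : 1 ≤ p)
    (t0 tf : ℝ) (ht : t0 < tf)
    (ftil : (Fin r → ℝ) → ℝ → (Fin p → ℝ) → (Fin r → ℝ))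
    (gtil : (Fin r → ℝ) → (Fin p → ℝ) → (Fin m → ℝ))
    (Ly : (Fin m → ℝ) → ℝ) (y : ℝ → (Fin m → ℝ))
    (hftil : ContDiff ℝ 1
      (fun q : (Fin r → ℝ) × ℝ × (Fin p → ℝ) => ftil q.1 q.2.1 q.2.2))
    (hgtil : ContDiff ℝ 1 (fun q : (Fin r → ℝ) × (Fin p → ℝ) => gtil q.1 q.2))
    (hLy : ContDiff ℝ 1 Ly)
    (hy : ContinuousOn y (Set.Icc t0 tf))
    (z : ℝ → (Fin p → ℝ) → (Fin r → ℝ))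
    (hz : ContDiff ℝ 1 (fun q : ℝ × (Fin p → ℝ) => z q.1 q.2))
    (hzode : ∀ t ∈ Set.Icc t0 tf, ∀ ϑ : Fin p → ℝ,
      HasDerivAt (fun s => z s ϑ) (ftil (z t ϑ) t ϑ) t)
    (θ : Fin p → ℝ)
    (lam : ℝ → (Fin r → ℝ))
    (hlamtf : lam tf = 0)
    (hlam : ∀ t ∈ Set.Icc t0 tf,
      HasDerivWithinAt lam
        (-((jacobianMat (fun w => ftil w t θ) (z t θ))ᵀ.mulVec (lam t) +
            (jacobianMat (fun w => gtil w θ) (z t θ))ᵀ.mulVec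
              (gradVec Ly (gtil (z t θ) θ - y t))))
        (Set.Icc t0 tf) t) :
    DifferentiableAt ℝ
      (fun ϑ : Fin p → ℝ => ∫ t in t0..tf, Ly (gtil (z t ϑ) ϑ - y t)) θ ∧
    ∀ v : Fin p → ℝ,
      fderiv ℝ (fun ϑ : Fin p → ℝ => ∫ t in t0..tf, Ly (gtil (z t ϑ) ϑ - y t)) θ v =
        ((jacobianMat (fun ϑ => z t0 ϑ) θ)ᵀ.mulVec (lam t0) +
          ∫ t in t0..tf,
            ((jacobianMat (fun ϑ => ftil (z t θ) t ϑ) θ)ᵀ.mulVec (lam t) +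
              (jacobianMat (fun ϑ => gtil (z t θ) ϑ) θ)ᵀ.mulVec
                (gradVec Ly (gtil (z t θ) θ - y t)))) ⬝ᵥ v := by
  -- `y` is replaced by its continuous extension, constant outside `[t₀, t_f]`
  let y' : ℝ → Fin m → ℝ := Set.IccExtend ht.le ((Set.Icc t0 tf).domRestrict y)
  have hy' : Continuous y' := hy.domRestrict.Icc_extend'
  have e : ∀ t ∈ Set.Icc t0 tf, y' t = y t := fun t h => Set.IccExtend_of_mem ht.le _ h
  have key := adjoint_formula_of_continuous r m p t0 tf ht ftil gtil Ly y' hftil hgtil hLy hy' z hz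
    hzode θ lam hlamtf (fun t h => by rw [e t h]; exact hlam t h)
  have hJ : (fun ϑ : Fin p → ℝ => ∫ t in t0..tf, Ly (gtil (z t ϑ) ϑ - y' t)) =
      fun ϑ => ∫ t in t0..tf, Ly (gtil (z t ϑ) ϑ - y t) := by
    funext ϑ
    refine intervalIntegral.integral_congr fun t h => ?_
    rw [Set.uIcc_of_le ht.le] at h
    simp only [e t h]
  have hK : ∫ t in t0..tf, ((jacobianMat (fun ϑ => ftil (z t θ) t ϑ) θ)ᵀ.mulVec (lam t) +
        (jacobianMat (fun ϑ => gtil (z t θ) ϑ) θ)ᵀ.mulVec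
          (gradVec Ly (gtil (z t θ) θ - y' t))) =
      ∫ t in t0..tf, ((jacobianMat (fun ϑ => ftil (z t θ) t ϑ) θ)ᵀ.mulVec (lam t) +
        (jacobianMat (fun ϑ => gtil (z t θ) ϑ) θ)ᵀ.mulVec
          (gradVec Ly (gtil (z t θ) θ - y t))) := by
    refine intervalIntegral.integral_congr fun t h => ?_
    rw [Set.uIcc_of_le ht.le] at h
    simp only [e t h]
  rw [hJ, hK] at key
  exact key
end

section
/- Let n ≥ r ≥ 1, let Φ_0 ∈ ℝ^{n×r} have full column rank, and let ξ, η ∈ ℝ^{n×r} satisfy Φ_0ᵀ ξ = 0 and Φ_0ᵀ η = 0. Set Φ_1 = Φ_0 + ξ, G_0 = Φ_0ᵀΦ_0, and G_1 = Φ_1ᵀΦ_1. Then G_1 = G_0 + ξᵀξ is positive definite (so Φ_1 has full column rank), and with P η = η − Φ_1 G_1^{−1} Φ_1ᵀ η one has Tr[ G_1^{−1} (Pη)ᵀ (Pη) ] ≤ Tr[ G_0^{−1} ηᵀ η ]. -/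
/-!
Write `G₀ = Φ₀ᵀΦ₀`, `G₁ = Φ₁ᵀΦ₁ = G₀ + ξᵀξ` and `S = Φ₁ᵀη`. Since `P` is an orthogonal projection,
`(Pη)ᵀ(Pη) = ηᵀη - SᵀG₁⁻¹S` (`residual_gram`), so dropping the second term, whose trace against
`G₁⁻¹` is nonnegative, leaves `Tr[G₁⁻¹ηᵀη]`. As `G₀ ≤ G₁` in the Loewner order,
`G₁⁻¹ ≤ G₀⁻¹` (`posSemidef_inv_sub_inv_add`), and the trace against `ηᵀη ≥ 0` preserves this.
-/

open Matrix

/-- Inversion is antitone for the Loewner order: `A⁻¹ - (A + K)⁻¹` is congruent, via `(A + K)⁻¹`,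
to `K + K A⁻¹ K`. -/
theorem posSemidef_inv_sub_inv_add {m : Type*} [Fintype m] [DecidableEq m]
    {A K : Matrix m m ℝ} (hA : A.PosDef) (hK : K.PosSemidef) :
    (A⁻¹ - (A + K)⁻¹).PosSemidef := by
  have hB : (A + K).PosDef := hA.add_posSemidef hK
  have hAu : IsUnit A.det := (Matrix.isUnit_iff_isUnit_det A).1 hA.isUnit
  have hBu : IsUnit (A + K).det := (Matrix.isUnit_iff_isUnit_det _).1 hB.isUnit
  have h1 : (K + Kᴴ * A⁻¹ * K).PosSemidef :=
    hK.add (hA.inv.posSemidef.conjTranspose_mul_mul_same K)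
  have h2 := h1.conjTranspose_mul_mul_same (A + K)⁻¹
  rw [hB.inv.isHermitian.eq, hK.isHermitian.eq] at h2
  have h3 : K + K * A⁻¹ * K = (A + K) * A⁻¹ * (A + K) - (A + K) := by
    simp only [add_mul, mul_add, Matrix.mul_nonsing_inv A hAu, one_mul,
      Matrix.nonsing_inv_mul_cancel_right A K hAu]
    abel
  have h4 : (A + K)⁻¹ * (K + K * A⁻¹ * K) * (A + K)⁻¹ = A⁻¹ - (A + K)⁻¹ := by
    rw [h3, mul_sub, sub_mul, Matrix.nonsing_inv_mul _ hBu, one_mul, Matrix.mul_assoc (A + K),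
      Matrix.nonsing_inv_mul_cancel_left _ _ hBu, Matrix.mul_nonsing_inv_cancel_right _ _ hBu]
  rwa [h4] at h2

theorem trace_mul_transpose_mul_self_nonneg {m k : Type*} [Fintype m] [Fintype k]
    {A : Matrix m m ℝ} (hA : A.PosSemidef) (Y : Matrix k m ℝ) :
    0 ≤ (A * (Yᵀ * Y)).trace := by
  have h := (hA.mul_mul_conjTranspose_same Y).trace_nonneg
  rwa [conjTranspose_eq_transpose_of_trivial, Matrix.mul_assoc, Matrix.trace_mul_comm,
    Matrix.mul_assoc] at h

/-- Pythagoras for the least-squares residual of `η` on the columns of `Φ`. -/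
theorem residual_gram {m k : Type*} [Fintype m] [Fintype k] [DecidableEq m]
    (Φ η : Matrix k m ℝ) (hG : IsUnit (Φᵀ * Φ).det) :
    (η - Φ * (Φᵀ * Φ)⁻¹ * (Φᵀ * η))ᵀ * (η - Φ * (Φᵀ * Φ)⁻¹ * (Φᵀ * η)) =
      ηᵀ * η - (Φᵀ * η)ᵀ * (Φᵀ * Φ)⁻¹ * (Φᵀ * η) := by
  have h0 : Φᵀ * (η - Φ * (Φᵀ * Φ)⁻¹ * (Φᵀ * η)) = 0 := by
    rw [Matrix.mul_sub, Matrix.mul_assoc Φ, ← Matrix.mul_assoc Φᵀ Φ,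
      Matrix.mul_nonsing_inv_cancel_left _ _ hG, sub_self]
  rw [Matrix.transpose_sub, Matrix.sub_mul, Matrix.mul_assoc Φ, Matrix.transpose_mul Φ,
    Matrix.mul_assoc _ Φᵀ, ← Matrix.mul_assoc Φ, h0, Matrix.mul_zero, sub_zero, Matrix.mul_sub]
  simp only [Matrix.transpose_mul, Matrix.transpose_transpose, Matrix.mul_assoc]

theorem posDef_gram_of_rank {n r : ℕ} (Φ : Matrix (Fin n) (Fin r) ℝ) (h : Φ.rank = r) :
    (Φᵀ * Φ).PosDef := by
  rw [← conjTranspose_eq_transpose_of_trivial]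
  apply PosDef.conjTranspose_mul_self
  rw [Matrix.mulVec_injective_iff, linearIndependent_iff_card_eq_finrank_span,
    Set.finrank, ← Matrix.rank_eq_finrank_span_cols, h, Fintype.card_fin]

/-- Non-expansiveness of the Grassmannian vector transport expressed on horizontal lifts:
with `ξ, η` horizontal at a full-column-rank `Φ₀`, `Φ₁ = Φ₀ + ξ`, `G₀ = Φ₀ᵀΦ₀`,
`G₁ = Φ₁ᵀΦ₁ = G₀ + ξᵀξ` positive definite (so `Φ₁` has full column rank), the projection
`Pη = η − Φ₁G₁⁻¹Φ₁ᵀη` onto the horizontal space at `Φ₁` satisfies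
`Tr[G₁⁻¹ (Pη)ᵀ(Pη)] ≤ Tr[G₀⁻¹ ηᵀη]`. -/
theorem stmt_18 (n r : ℕ) (hr : 1 ≤ r) (hrn : r ≤ n)
    (Φ₀ ξ η : Matrix (Fin n) (Fin r) ℝ) (hΦ₀ : Φ₀.rank = r)
    (hξ : Φ₀ᵀ * ξ = 0) (hη : Φ₀ᵀ * η = 0) :
    (Φ₀ + ξ)ᵀ * (Φ₀ + ξ) = Φ₀ᵀ * Φ₀ + ξᵀ * ξ ∧
    ((Φ₀ + ξ)ᵀ * (Φ₀ + ξ)).PosDef ∧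
    (Φ₀ + ξ).rank = r ∧
    Matrix.trace (((Φ₀ + ξ)ᵀ * (Φ₀ + ξ))⁻¹ *
        (η - (Φ₀ + ξ) * ((Φ₀ + ξ)ᵀ * (Φ₀ + ξ))⁻¹ * ((Φ₀ + ξ)ᵀ * η))ᵀ *
        (η - (Φ₀ + ξ) * ((Φ₀ + ξ)ᵀ * (Φ₀ + ξ))⁻¹ * ((Φ₀ + ξ)ᵀ * η))) ≤
      Matrix.trace ((Φ₀ᵀ * Φ₀)⁻¹ * ηᵀ * η) := by
  have hξ' : ξᵀ * Φ₀ = 0 := by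
    simpa only [Matrix.transpose_mul, Matrix.transpose_transpose, Matrix.transpose_zero]
      using congrArg Matrix.transpose hξ
  have hG : (Φ₀ + ξ)ᵀ * (Φ₀ + ξ) = Φ₀ᵀ * Φ₀ + ξᵀ * ξ := by
    rw [Matrix.transpose_add, Matrix.add_mul, Matrix.mul_add, Matrix.mul_add, hξ, hξ', add_zero,
      zero_add]
  have hG₀ : (Φ₀ᵀ * Φ₀).PosDef := posDef_gram_of_rank Φ₀ hΦ₀
  have hK : (ξᵀ * ξ).PosSemidef := by
    simpa only [conjTranspose_eq_transpose_of_trivial] using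
      Matrix.posSemidef_conjTranspose_mul_self ξ
  have hG₁ : ((Φ₀ + ξ)ᵀ * (Φ₀ + ξ)).PosDef := hG ▸ hG₀.add_posSemidef hK
  refine ⟨hG, hG₁, ?_, ?_⟩
  · rw [← Matrix.rank_transpose_mul_self, Matrix.rank_of_isUnit _ hG₁.isUnit, Fintype.card_fin]
  have hmono := posSemidef_inv_sub_inv_add hG₀ hK
  rw [← hG] at hmono
  generalize Φ₀ + ξ = Φ at *
  have hu : IsUnit (Φᵀ * Φ).det := (Matrix.isUnit_iff_isUnit_det _).1 hG₁.isUnit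
  have hT : ((Φᵀ * Φ)⁻¹)ᵀ = (Φᵀ * Φ)⁻¹ := by
    rw [← conjTranspose_eq_transpose_of_trivial, hG₁.inv.isHermitian.eq]
  have hm := trace_mul_transpose_mul_self_nonneg hmono η
  rw [Matrix.sub_mul, Matrix.trace_sub] at hm
  -- `SᵀG⁻¹S` is the Gram matrix of `Φ G⁻¹ S`, where `S = Φᵀη` and `G = ΦᵀΦ`.
  have hS := trace_mul_transpose_mul_self_nonneg hG₁.inv.posSemidef
    (Φ * (Φᵀ * Φ)⁻¹ * (Φᵀ * η))
  have hgram : (Φ * (Φᵀ * Φ)⁻¹ * (Φᵀ * η))ᵀ * (Φ * (Φᵀ * Φ)⁻¹ * (Φᵀ * η)) =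
      (Φᵀ * η)ᵀ * (Φᵀ * Φ)⁻¹ * (Φᵀ * η) := by
    rw [Matrix.transpose_mul _ (Φᵀ * η), Matrix.transpose_mul Φ, hT, Matrix.mul_assoc Φ,
      Matrix.mul_assoc, Matrix.mul_assoc _ Φᵀ, ← Matrix.mul_assoc Φᵀ Φ,
      Matrix.mul_nonsing_inv_cancel_left _ _ hu, Matrix.mul_assoc]
  rw [hgram] at hS
  rw [Matrix.mul_assoc, residual_gram Φ η hu, Matrix.mul_sub, Matrix.trace_sub,
    Matrix.mul_assoc _ ηᵀ]
  linarith
end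

section
/- Let n ≥ r ≥ 1, let Φ ∈ ℝ^{n×r} have full column rank, and let ξ ∈ ℝ^{n×r} satisfy Φᵀ ξ = 0. For t ∈ ℝ set Φ(t) = Φ + tξ and G(t) = Φ(t)ᵀΦ(t). Then G(t) = G(0) + t²ξᵀξ is positive definite for every t ∈ ℝ, and the matrix A(t) = −2t ( I_n − Φ(t) G(t)^{−1} Φ(t)ᵀ ) ξ G(t)^{−1} ξᵀ ξ satisfies, for every t ∈ ℝ, Tr[ G(t)^{−1} A(t)ᵀ A(t) ] ≤ r ( Tr[ G(0)^{−1} ξᵀ ξ ] )². -/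
/-!
The estimate reduces to a scalar one by simultaneous diagonalization. Since `Φᵀ * Φ` is positive
definite and `ξᵀ * ξ` is positive semidefinite, there are an invertible `C` and `d ≥ 0` with
`Φᵀ * Φ = Cᵀ * C` and `ξᵀ * ξ = Cᵀ * diagonal d * C` (`exists_simultaneous_diagonalization`).
Because the orthogonal projection `1 - Φ(t) G(t)⁻¹ Φ(t)ᵀ` is symmetric and idempotent,
`A(t)ᵀ A(t)` is an expression in `S = ξᵀ * ξ` and `G(t)⁻¹` alone (`gram_acceleration`), namely
`4 t² S G⁻¹ (S - t² S G⁻¹ S) G⁻¹ S`. In the coordinates given by `C` the left-hand trace becomes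
`∑ 4 t² dᵢ³ / (1 + t² dᵢ)⁴`, and `4 u ≤ (1 + u)²` with `u = t² dᵢ` bounds each term by `dᵢ²`. Finally
`∑ dᵢ² ≤ (∑ dᵢ)²`, and `∑ dᵢ` is the trace of `(Φᵀ * Φ)⁻¹ * (ξᵀ * ξ)`. This already gives the bound
with constant `1`, which is at most `r`.
-/

open Matrix

/-- A positive definite and a positive semidefinite matrix are simultaneously diagonalized by a
congruence that takes the former to the identity. -/
lemma exists_simultaneous_diagonalization {r : ℕ} {G S : Matrix (Fin r) (Fin r) ℝ}
    (hG : G.PosDef) (hS : S.PosSemidef) :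
    ∃ (C E : Matrix (Fin r) (Fin r) ℝ) (d : Fin r → ℝ), C * E = 1 ∧ E * C = 1 ∧
      (∀ i, 0 ≤ d i) ∧ G = Cᵀ * C ∧ S = Cᵀ * diagonal d * C := by
  obtain ⟨L, hL⟩ : ∃ L : Matrix (Fin r) (Fin r) ℝ, G = Lᵀ * L := by
    open scoped MatrixOrder in
    exact CStarAlgebra.nonneg_iff_eq_star_mul_self.mp hG.posSemidef.nonneg
  have hLu : IsUnit L := by
    have h := hG.isUnit
    rw [isUnit_iff_isUnit_det, hL, det_mul, det_transpose] at h
    exact (isUnit_iff_isUnit_det _).2 (isUnit_of_mul_isUnit_left h)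
  have hdet := (isUnit_iff_isUnit_det _).1 hLu
  have h1 : L * L⁻¹ = 1 := mul_nonsing_inv _ hdet
  have h2 : L⁻¹ * L = 1 := nonsing_inv_mul _ hdet
  have hT : (L⁻¹ᵀ * S * L⁻¹).PosSemidef := by
    simpa only [conjTranspose_eq_transpose_of_trivial] using hS.conjTranspose_mul_mul_same L⁻¹
  set U : Matrix (Fin r) (Fin r) ℝ := hT.isHermitian.eigenvectorUnitary.1
  have hU1 : Uᵀ * U = 1 := Unitary.coe_star_mul_self hT.isHermitian.eigenvectorUnitary
  have hU2 : U * Uᵀ = 1 := Unitary.coe_mul_star_self hT.isHermitian.eigenvectorUnitary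
  have hspec : L⁻¹ᵀ * S * L⁻¹ = U * diagonal hT.isHermitian.eigenvalues * Uᵀ := by
    have h := hT.isHermitian.spectral_theorem
    rw [Unitary.conjStarAlgAut_apply] at h
    exact h
  have h3 : Lᵀ * L⁻¹ᵀ = 1 := by rw [← transpose_mul, h2, transpose_one]
  refine ⟨Uᵀ * L, L⁻¹ * U, hT.isHermitian.eigenvalues, ?_, ?_, hT.eigenvalues_nonneg, ?_, ?_⟩
  · rw [Matrix.mul_assoc, ← Matrix.mul_assoc L, h1, Matrix.one_mul, hU1]
  · rw [Matrix.mul_assoc, ← Matrix.mul_assoc U, hU2, Matrix.one_mul, h2]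
  · rw [transpose_mul, transpose_transpose, Matrix.mul_assoc, ← Matrix.mul_assoc U, hU2,
      Matrix.one_mul, hL]
  · calc S = (Lᵀ * L⁻¹ᵀ) * S * (L⁻¹ * L) := by rw [h3, h2, Matrix.one_mul, Matrix.mul_one]
      _ = Lᵀ * (L⁻¹ᵀ * S * L⁻¹) * L := by simp only [Matrix.mul_assoc]
      _ = Lᵀ * (U * diagonal hT.isHermitian.eigenvalues * Uᵀ) * L :=
        congrArg (fun X => Lᵀ * X * L) hspec
      _ = _ := by
        simp only [transpose_mul, transpose_transpose, Matrix.mul_assoc]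

/-- The Gram matrix of the acceleration depends only on `S = ξᵀ * ξ` and on the inverse `H` of
`Fᵀ * F`, because `1 - F * H * Fᵀ` is an orthogonal projection. -/
lemma gram_acceleration {n r : ℕ} (t : ℝ) (F ξ : Matrix (Fin n) (Fin r) ℝ)
    (H S : Matrix (Fin r) (Fin r) ℝ) (hH : Hᵀ = H) (hHG : H * (Fᵀ * F) = 1)
    (hS : ξᵀ * ξ = S) (hFξ : Fᵀ * ξ = t • S) :
    ((-2 * t) • ((1 - F * H * Fᵀ) * ξ * H * S))ᵀ * ((-2 * t) • ((1 - F * H * Fᵀ) * ξ * H * S)) =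
      (4 * t ^ 2) • (S * H * (S - t ^ 2 • (S * H * S)) * H * S) := by
  have hSt : Sᵀ = S := by rw [← hS, transpose_mul, transpose_transpose]
  have hξF : ξᵀ * F = t • S := by
    rw [← transpose_transpose (ξᵀ * F), transpose_mul, transpose_transpose, hFξ, transpose_smul,
      hSt]
  have hQt : (1 - F * H * Fᵀ)ᵀ = 1 - F * H * Fᵀ := by
    simp [transpose_mul, hH, Matrix.mul_assoc]
  have hP : F * H * Fᵀ * (F * H * Fᵀ) = F * H * Fᵀ := by
    calc F * H * Fᵀ * (F * H * Fᵀ) = F * (H * (Fᵀ * F)) * H * Fᵀ := by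
          simp only [Matrix.mul_assoc]
      _ = _ := by rw [hHG, Matrix.mul_one]
  have hQ : (1 - F * H * Fᵀ) * (1 - F * H * Fᵀ) = 1 - F * H * Fᵀ := by
    rw [Matrix.mul_sub, Matrix.mul_one, Matrix.sub_mul, hP, Matrix.one_mul, sub_self, sub_zero]
  have hmid : ξᵀ * (1 - F * H * Fᵀ) * ξ = S - t ^ 2 • (S * H * S) := by
    calc ξᵀ * (1 - F * H * Fᵀ) * ξ = ξᵀ * ξ - (ξᵀ * F) * H * (Fᵀ * ξ) := by
          simp only [Matrix.mul_sub, Matrix.sub_mul, Matrix.mul_one, Matrix.mul_assoc]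
      _ = _ := by
        rw [hS, hξF, hFξ]
        simp [smul_smul, sq]
  rw [← hmid, transpose_smul, Matrix.smul_mul, Matrix.mul_smul, smul_smul, transpose_mul, transpose_mul, transpose_mul,
    hQt, hSt, hH]
  congr 1
  · ring
  · calc S * (H * (ξᵀ * (1 - F * H * Fᵀ))) * ((1 - F * H * Fᵀ) * ξ * H * S)
        = S * H * (ξᵀ * ((1 - F * H * Fᵀ) * (1 - F * H * Fᵀ)) * ξ) * H * S := by
          simp only [Matrix.mul_assoc]
      _ = _ := by rw [hQ]

/-- The scalar form of the bound; it is `4 u ≤ (1 + u) ^ 2` for `u = t ^ 2 * d`. -/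
lemma scalar_bound (t d : ℝ) (hd : 0 ≤ d) :
    4 * t ^ 2 * ((1 + t ^ 2 * d)⁻¹ * (d * (1 + t ^ 2 * d)⁻¹ *
      (d - t ^ 2 * (d * (1 + t ^ 2 * d)⁻¹ * d)) * (1 + t ^ 2 * d)⁻¹ * d)) ≤ d ^ 2 := by
  have hu : 0 ≤ t ^ 2 * d := by positivity
  set u := t ^ 2 * d with hud
  have hpos : 0 < 1 + u := by positivity
  have h : 4 * t ^ 2 * ((1 + u)⁻¹ * (d * (1 + u)⁻¹ *
      (d - t ^ 2 * (d * (1 + u)⁻¹ * d)) * (1 + u)⁻¹ * d)) = d ^ 2 * (4 * u / (1 + u) ^ 4) := by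
    have : d - t ^ 2 * (d * (1 + u)⁻¹ * d) = d * (1 + u)⁻¹ := by
      field_simp
      rw [hud]; ring
    rw [this]
    field_simp
    rw [hud]; ring
  rw [h]
  refine mul_le_of_le_one_right (sq_nonneg d) ?_
  rw [div_le_one (by positivity)]
  nlinarith [sq_nonneg (1 - u), one_le_pow₀ (n := 2) (show 1 ≤ 1 + u by linarith),
    sq_nonneg ((1 + u) ^ 2)]

/-- The trace bound in simultaneously diagonalizing coordinates, for the Gram matrix of
`gram_acceleration`. -/
lemma trace_bound {r : ℕ} (t : ℝ) (C E : Matrix (Fin r) (Fin r) ℝ) (d : Fin r → ℝ)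
    (hCE : C * E = 1) (hd : ∀ i, 0 ≤ d i) (H S : Matrix (Fin r) (Fin r) ℝ)
    (hH : H = E * diagonal (fun i => (1 + t ^ 2 * d i)⁻¹) * Eᵀ)
    (hS : S = Cᵀ * diagonal d * C) :
    trace (H * ((4 * t ^ 2) • (S * H * (S - t ^ 2 • (S * H * S)) * H * S))) ≤ (∑ i, d i) ^ 2 := by
  have hEC : Eᵀ * Cᵀ = 1 := by rw [← transpose_mul, hCE, transpose_one]
  have hCE' (X : Matrix (Fin r) (Fin r) ℝ) : C * (E * X) = X := by
    rw [← Matrix.mul_assoc, hCE, Matrix.one_mul]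
  have hEC' (X : Matrix (Fin r) (Fin r) ℝ) : Eᵀ * (Cᵀ * X) = X := by
    rw [← Matrix.mul_assoc, hEC, Matrix.one_mul]
  set e : Fin r → ℝ := fun i => (1 + t ^ 2 * d i)⁻¹ with he
  have key : H * ((4 * t ^ 2) • (S * H * (S - t ^ 2 • (S * H * S)) * H * S)) =
      E * (((4 * t ^ 2) • (diagonal e * (diagonal d * diagonal e *
        (diagonal d - t ^ 2 • (diagonal d * diagonal e * diagonal d)) *
        diagonal e * diagonal d))) * C) := by
    rw [hH, hS]
    simp only [Matrix.mul_assoc, Matrix.mul_sub, Matrix.sub_mul, Matrix.mul_smul, Matrix.smul_mul,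
      hCE', hEC', smul_sub]
  rw [key, trace_mul_comm, Matrix.mul_assoc, hCE, Matrix.mul_one]
  have hdiag : trace ((4 * t ^ 2) • (diagonal e * (diagonal d * diagonal e *
        (diagonal d - t ^ 2 • (diagonal d * diagonal e * diagonal d)) *
        diagonal e * diagonal d))) =
      ∑ i, 4 * t ^ 2 * (e i * (d i * e i * (d i - t ^ 2 * (d i * e i * d i)) * e i * d i)) := by
    simp only [diagonal_mul_diagonal, ← diagonal_smul, diagonal_sub, trace_diagonal, Pi.smul_apply,
      smul_eq_mul]
  rw [hdiag]
  calc _ ≤ ∑ i, d i ^ 2 := Finset.sum_le_sum fun i _ => scalar_bound t (d i) (hd i)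
    _ ≤ _ := Finset.sum_sq_le_sq_sum_of_nonneg fun i _ => hd i

/-- Acceleration bound for the Grassmannian retraction curve: with `ξ` horizontal at a
full-column-rank `Φ`, `Φ(t) = Φ + tξ`, `G(t) = Φ(t)ᵀΦ(t) = G(0) + t²ξᵀξ` positive
definite, the horizontal lift `A(t) = −2t (I − Φ(t)G(t)⁻¹Φ(t)ᵀ) ξ G(t)⁻¹ ξᵀξ` of the
covariant acceleration satisfies `Tr[G(t)⁻¹ A(t)ᵀA(t)] ≤ r (Tr[G(0)⁻¹ ξᵀξ])²`. -/
theorem stmt_19 (n r : ℕ) (hr : 1 ≤ r) (hrn : r ≤ n)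
    (Φ ξ : Matrix (Fin n) (Fin r) ℝ) (hΦ : Φ.rank = r) (hξ : Φᵀ * ξ = 0) :
    ∀ t : ℝ,
      (Φ + t • ξ)ᵀ * (Φ + t • ξ) = Φᵀ * Φ + (t ^ 2) • (ξᵀ * ξ) ∧
      ((Φ + t • ξ)ᵀ * (Φ + t • ξ)).PosDef ∧
      Matrix.trace (((Φ + t • ξ)ᵀ * (Φ + t • ξ))⁻¹ *
          ((-2 * t) • ((1 - (Φ + t • ξ) * ((Φ + t • ξ)ᵀ * (Φ + t • ξ))⁻¹ * (Φ + t • ξ)ᵀ) *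
            ξ * ((Φ + t • ξ)ᵀ * (Φ + t • ξ))⁻¹ * (ξᵀ * ξ)))ᵀ *
          ((-2 * t) • ((1 - (Φ + t • ξ) * ((Φ + t • ξ)ᵀ * (Φ + t • ξ))⁻¹ * (Φ + t • ξ)ᵀ) *
            ξ * ((Φ + t • ξ)ᵀ * (Φ + t • ξ))⁻¹ * (ξᵀ * ξ)))) ≤
        (r : ℝ) * (Matrix.trace ((Φᵀ * Φ)⁻¹ * (ξᵀ * ξ))) ^ 2 := by
  intro t
  have hξ' : ξᵀ * Φ = 0 := by
    rw [← transpose_transpose (ξᵀ * Φ), transpose_mul, transpose_transpose, hξ, transpose_zero]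
  have hG : (Φ + t • ξ)ᵀ * (Φ + t • ξ) = Φᵀ * Φ + (t ^ 2) • (ξᵀ * ξ) := by
    simp [Matrix.add_mul, Matrix.mul_add, hξ, hξ', smul_smul, sq]
  have hpsd (X : Matrix (Fin n) (Fin r) ℝ) : (Xᵀ * X).PosSemidef := by
    simpa only [conjTranspose_eq_transpose_of_trivial] using posSemidef_conjTranspose_mul_self X
  have hG0 : (Φᵀ * Φ).PosDef := by
    refine ((hpsd Φ).posDef_iff_isUnit).2 ?_
    rw [← mulVec_injective_iff_isUnit, mulVec_injective_iff,
      linearIndependent_iff_card_eq_finrank_span, Set.finrank, ← rank_eq_finrank_span_cols,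
      rank_transpose_mul_self, hΦ, Fintype.card_fin]
  have hGt : ((Φ + t • ξ)ᵀ * (Φ + t • ξ)).PosDef := by
    rw [hG]
    exact hG0.add_posSemidef ((hpsd ξ).smul (sq_nonneg t))
  refine ⟨hG, hGt, ?_⟩
  obtain ⟨C, E, d, hCE, hEC, hd, hC0, hCS⟩ :=
    exists_simultaneous_diagonalization hG0 (hpsd ξ)
  have hECt : Eᵀ * Cᵀ = 1 := by rw [← transpose_mul, hCE, transpose_one]
  have hH : ((Φ + t • ξ)ᵀ * (Φ + t • ξ))⁻¹ =
      E * diagonal (fun i => (1 + t ^ 2 * d i)⁻¹) * Eᵀ := by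
    have hGd : (Φ + t • ξ)ᵀ * (Φ + t • ξ) = Cᵀ * diagonal (fun i => 1 + t ^ 2 * d i) * C := by
      have : diagonal (fun i => 1 + t ^ 2 * d i) = 1 + t ^ 2 • diagonal d := by
        rw [← diagonal_one, ← diagonal_smul, diagonal_add]; rfl
      rw [hG, hC0, hCS, this]
      simp [Matrix.mul_add, Matrix.add_mul]
    have hdd : diagonal (fun i => (1 + t ^ 2 * d i)⁻¹) * diagonal (fun i => 1 + t ^ 2 * d i) =
        (1 : Matrix (Fin r) (Fin r) ℝ) := by
      rw [diagonal_mul_diagonal, ← diagonal_one]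
      congr 1
      funext i
      have := hd i
      exact inv_mul_cancel₀ (by positivity)
    rw [hGd]
    refine inv_eq_left_inv ?_
    calc _ = E * (diagonal (fun i => (1 + t ^ 2 * d i)⁻¹) * ((Eᵀ * Cᵀ) *
          diagonal (fun i => 1 + t ^ 2 * d i))) * C := by simp only [Matrix.mul_assoc]
      _ = 1 := by rw [hECt, Matrix.one_mul, hdd, Matrix.mul_one, hEC]
  have htr : trace ((Φᵀ * Φ)⁻¹ * (ξᵀ * ξ)) = ∑ i, d i := by
    have h0 : (Φᵀ * Φ)⁻¹ = E * Eᵀ := by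
      rw [hC0]
      refine inv_eq_left_inv ?_
      rw [Matrix.mul_assoc, ← Matrix.mul_assoc Eᵀ, hECt, Matrix.one_mul, hEC]
    rw [h0, hCS]
    calc _ = trace (E * ((Eᵀ * Cᵀ) * diagonal d * C)) := by simp only [Matrix.mul_assoc]
      _ = _ := by
        rw [hECt, Matrix.one_mul, trace_mul_comm, Matrix.mul_assoc, hCE, Matrix.mul_one,
          trace_diagonal]
  have hFξ : (Φ + t • ξ)ᵀ * ξ = t • (ξᵀ * ξ) := by simp [Matrix.add_mul, hξ]
  have hHG : ((Φ + t • ξ)ᵀ * (Φ + t • ξ))⁻¹ * ((Φ + t • ξ)ᵀ * (Φ + t • ξ)) = 1 :=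
    nonsing_inv_mul _ ((isUnit_iff_isUnit_det _).1 hGt.isUnit)
  have hHt : (((Φ + t • ξ)ᵀ * (Φ + t • ξ))⁻¹)ᵀ = ((Φ + t • ξ)ᵀ * (Φ + t • ξ))⁻¹ := by
    rw [transpose_nonsing_inv, transpose_mul, transpose_transpose]
  rw [Matrix.mul_assoc, gram_acceleration t _ ξ _ _ hHt hHG rfl hFξ, htr]
  refine (trace_bound t C E d hCE hd _ _ hH hCS).trans ?_
  exact le_mul_of_one_le_left (sq_nonneg _) (by exact_mod_cast hr)
end
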